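/- arXiv:2010.03398 — 8 statements merged into one kernel-verified Lean document; each statement's English description precedes it below -/
import Mathlib

section
/- Let A be an n×N integer matrix (n<N) with columns a(1),…,a(N), let σ ⊆ {1,…,N} be a simplex such that the sum of the entries of A_σ^{-1}a(j) is at most 1 for every j ∉ σ, let σ = σ^u ⊔ σ^d be a partition, and let c ∈ ℂ^n be very generic with respect to σ. Then there exists R > 0 such that for every z ∈ (ℂ∖(-∞,0])^N satisfying |z_j|·∏_{i∈σ}|z_i|^{-p_{σi}(a(j))} < R for every j ∉ σ with Σ_{i∈σ} p_{σi}(a(j)) = 1 (and no condition on the coordinates z_j with Σ_{i∈σ} p_{σi}(a(j)) < 1), the family of terms of the Γ-series ψ_{σ^d}^{σ^u}(z;c) indexed by m ∈ ℤ_{≥0}^{σ̄} is absolutely summable. -/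
open Complex

/-- The term of the Γ-series `ψ_{σ^d}^{σ^u}(z;c)` indexed by `m ∈ ℤ_{≥0}^{σ̄}`.
Here `B` is the inverse of `A_σ` (as a complex matrix), so that
`p_{σ i}(v) = (B.mulVec v) i`. -/
noncomputable def gammaSeriesTerm {n N : ℕ} (A : Matrix (Fin n) (Fin N) ℤ)
    (σ σu σd : Finset (Fin N)) (B : Matrix {i : Fin N // i ∈ σ} (Fin n) ℂ)
    (z : Fin N → ℂ) (c : Fin n → ℂ) (m : {j : Fin N // j ∉ σ} → ℕ) : ℂ :=
  let pc : {i : Fin N // i ∈ σ} → ℂ :=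
    B.mulVec (fun r => c r + ∑ j : {j : Fin N // j ∉ σ}, (A r j.1 : ℂ) * (m j : ℂ))
  (∏ i : {i : Fin N // i ∈ σ}, if i.1 ∈ σu then Complex.Gamma (pc i) else 1) /
    ((∏ i : {i : Fin N // i ∈ σ}, if i.1 ∈ σd then Complex.Gamma (1 - pc i) else 1) *
      ∏ j : {j : Fin N // j ∉ σ}, ((m j).factorial : ℂ)) *
    (∏ i : {i : Fin N // i ∈ σ}, Complex.exp (-(pc i) *
      (Complex.log (z i.1) + (if i.1 ∈ σu then (Real.pi : ℂ) * Complex.I else 0)))) *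
    ∏ j : {j : Fin N // j ∉ σ}, z j.1 ^ (m j)

/-!
Put `X = 1 + |m|`. Iterating `Γ(w + 1) = w Γ(w)` from a non-integral base point `β` shows that
`|Γ(β + k)| ≤ e^{C X} X^k` uniformly for integers `k` with `|k| = O(X)`: each of `q` steps upwards
multiplies by a factor `O(X)`, while `q` steps downwards divide by factors comparable with
`1, …, q`, and `1 / q! ≤ e^X X^{-q}`. The same functional equation, hence the same bound, holds for
`1 / Γ(1 - w)`. As the rational numbers `p_{σ i}(A_{σ̄} m)` have only finitely many classes modulo
`ℤ`, one constant `C` serves for all `m`.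

Together with `1 / m_j! ≤ e^X X^{-m_j}` this bounds the coefficients of the Γ-series by
`e^{C X} ∏_j X^{-ε_j m_j}`, where `ε_j = 1 - ∑_{i ∈ σ} p_{σ i}(a(j)) ≥ 0`. Since `X ≥ m_j + 1`, the
series is dominated by a product of series in one variable: a geometric one if `ε_j = 0`, and one
with infinite radius of convergence if `ε_j > 0`.
-/

open Filter Topology
open scoped Nat

/-- Nonnegative functions on `ℂ` with the functional equation of `|Γ|`. Both `|Γ(w)|` and
`1 / |Γ(1 - w)|` are examples, so that the two kinds of factors of a Γ-series can be estimated
together. -/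
structure IsGammaModulus (F : ℂ → ℝ) : Prop where
  nonneg (w : ℂ) : 0 ≤ F w
  map_add_one {w : ℂ} (hw : w ≠ 0) : F (w + 1) = ‖w‖ * F w

lemma isGammaModulus_norm_Gamma : IsGammaModulus fun w => ‖Gamma w‖ where
  nonneg _ := norm_nonneg _
  map_add_one hw := by rw [Gamma_add_one _ hw, norm_mul]

lemma isGammaModulus_inv_norm_Gamma_one_sub : IsGammaModulus fun w => ‖Gamma (1 - w)‖⁻¹ where
  nonneg _ := inv_nonneg.2 (norm_nonneg _)
  map_add_one {w} hw := by
    rw [show 1 - w = -w + 1 by ring, show 1 - (w + 1) = -w by ring,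
      Gamma_add_one _ (neg_ne_zero.2 hw), norm_mul, norm_neg, mul_inv,
      mul_inv_cancel_left₀ (norm_ne_zero_iff.2 hw)]

lemma exists_natCast_le_mul_norm_sub {β : ℂ} (hβ : ∀ n : ℕ, β ≠ n) :
    ∃ M : ℝ, 0 ≤ M ∧ ∀ n : ℕ, n ≤ M * ‖β - n‖ := by
  have hlim : Tendsto (fun n : ℕ => ‖(n : ℂ) / (n + -β)‖) atTop (𝓝 ‖(1 : ℂ)‖) :=
    (tendsto_natCast_div_add_atTop (-β)).norm
  obtain ⟨M, hM⟩ := hlim.bddAbove_range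
  refine ⟨M, by simpa using hM (Set.mem_range_self 0), fun n => ?_⟩
  have hpos : 0 < ‖β - n‖ := norm_pos_iff.2 (sub_ne_zero.2 (hβ n))
  rw [← div_le_iff₀ hpos, norm_sub_rev, sub_eq_add_neg]
  simpa only [norm_div, norm_natCast] using hM (Set.mem_range_self n)

lemma inv_factorial_le_exp_mul_rpow_neg {X : ℝ} (hX : 0 < X) (k : ℕ) :
    (k ! : ℝ)⁻¹ ≤ Real.exp X * X ^ (-(k : ℝ)) := by
  rw [Real.rpow_neg hX.le, Real.rpow_natCast, ← div_eq_mul_inv, le_div_iff₀ (by positivity),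
    mul_comm, ← div_eq_mul_inv]
  exact Real.pow_div_factorial_le_exp X hX.le k

lemma pow_le_exp_mul {a b : ℝ} (ha : 0 ≤ a) {q : ℕ} (hq : q ≤ b) :
    a ^ q ≤ Real.exp (a * b) :=
  calc a ^ q ≤ Real.exp a ^ q := by gcongr; linarith [Real.add_one_le_exp a]
    _ = Real.exp (a * q) := by rw [← Real.exp_nat_mul, mul_comm]
    _ ≤ Real.exp (a * b) := by gcongr

namespace IsGammaModulus

variable {F : ℂ → ℝ}

lemma apply_add_natCast_le (hF : IsGammaModulus F) {β : ℂ} (hβ : ∀ n : ℕ, β ≠ -n) (q : ℕ) :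
    F (β + q) ≤ F β * (‖β‖ + q) ^ q := by
  induction q with
  | zero => simp
  | succ q ih =>
    have hne : β + q ≠ 0 := fun h => hβ q (eq_neg_of_add_eq_zero_left h)
    have hnorm : ‖β + q‖ ≤ ‖β‖ + q := by simpa using norm_add_le β q
    have hβ0 := hF.nonneg β
    have hβq := hF.nonneg (β + q)
    calc F (β + (q + 1 : ℕ)) = ‖β + q‖ * F (β + q) := by
          rw [← hF.map_add_one hne, Nat.cast_succ, add_assoc]
      _ ≤ (‖β‖ + q) * (F β * (‖β‖ + q) ^ q) := by gcongr
      _ = F β * (‖β‖ + q) ^ (q + 1) := by ring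
      _ ≤ F β * (‖β‖ + (q + 1 : ℕ)) ^ (q + 1) := by gcongr; simp

lemma factorial_mul_apply_sub_natCast_le (hF : IsGammaModulus F) {β : ℂ} (hβ : ∀ n : ℕ, β ≠ n)
    {M : ℝ} (hM0 : 0 ≤ M) (hM : ∀ n : ℕ, n ≤ M * ‖β - n‖) (q : ℕ) :
    q ! * F (β - q) ≤ M ^ q * F β := by
  induction q with
  | zero => simp
  | succ q ih =>
    have hne : β - (q + 1 : ℕ) ≠ 0 := sub_ne_zero.2 (hβ (q + 1))
    have hrec : F (β - q) = ‖β - (q + 1 : ℕ)‖ * F (β - (q + 1 : ℕ)) := by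
      rw [← hF.map_add_one hne]
      congr 1
      push_cast
      ring
    have hnonneg := hF.nonneg (β - (q + 1 : ℕ))
    calc (q + 1)! * F (β - (q + 1 : ℕ))
        = (q + 1 : ℕ) * (q ! * F (β - (q + 1 : ℕ))) := by
          rw [Nat.factorial_succ]; push_cast; ring
      _ ≤ M * ‖β - (q + 1 : ℕ)‖ * (q ! * F (β - (q + 1 : ℕ))) := by gcongr; exact hM (q + 1)
      _ = M * (q ! * F (β - q)) := by rw [hrec]; ring
      _ ≤ M * (M ^ q * F β) := by gcongr
      _ = M ^ (q + 1) * F β := by ring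

-- Holding for all large `C`, such bounds can be combined over finitely many `β` and `F`.
lemma eventually_apply_add_natCast_le (hF : IsGammaModulus F) {β : ℂ} (hβ : ∀ n : ℕ, β ≠ -n)
    (P : ℝ) :
    ∀ᶠ C : ℝ in atTop, ∀ X : ℝ, 1 ≤ X → ∀ q : ℕ, q ≤ P * X →
      F (β + q) ≤ Real.exp (C * X) * X ^ (q : ℝ) := by
  filter_upwards [eventually_ge_atTop (F β + (‖β‖ + |P|) * |P|)] with C hC X hX q hq
  have hβ0 := hF.nonneg β
  have hqP : q ≤ |P| * X := hq.trans (by gcongr; exact le_abs_self P)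
  have hbase : ‖β‖ + q ≤ (‖β‖ + |P|) * X := by
    nlinarith [le_mul_of_one_le_right (norm_nonneg β) hX]
  calc F (β + q) ≤ F β * (‖β‖ + q) ^ q := hF.apply_add_natCast_le hβ q
    _ ≤ F β * ((‖β‖ + |P|) * X) ^ q := by gcongr
    _ = F β * (‖β‖ + |P|) ^ q * X ^ (q : ℝ) := by rw [mul_pow, Real.rpow_natCast]; ring
    _ ≤ Real.exp (F β * X) * Real.exp ((‖β‖ + |P|) * (|P| * X)) * X ^ (q : ℝ) := by
        gcongr
        · nlinarith [Real.add_one_le_exp (F β * X)]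
        · exact pow_le_exp_mul (by positivity) hqP
    _ = Real.exp ((F β + (‖β‖ + |P|) * |P|) * X) * X ^ (q : ℝ) := by
        rw [← Real.exp_add]; congr 2; ring
    _ ≤ Real.exp (C * X) * X ^ (q : ℝ) := by gcongr

lemma eventually_apply_sub_natCast_le (hF : IsGammaModulus F) {β : ℂ} (hβ : ∀ n : ℕ, β ≠ n)
    (P : ℝ) :
    ∀ᶠ C : ℝ in atTop, ∀ X : ℝ, 1 ≤ X → ∀ q : ℕ, q ≤ P * X →
      F (β - q) ≤ Real.exp (C * X) * X ^ (-(q : ℝ)) := by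
  obtain ⟨M, hM0, hM⟩ := exists_natCast_le_mul_norm_sub hβ
  filter_upwards [eventually_ge_atTop (F β + M * P + 1)] with C hC X hX q hq
  have hβ0 := hF.nonneg β
  calc F (β - q) = (q ! : ℝ)⁻¹ * (q ! * F (β - q)) := by field_simp
    _ ≤ (q ! : ℝ)⁻¹ * (M ^ q * F β) := by
        gcongr ?_ * ?_
        exact hF.factorial_mul_apply_sub_natCast_le hβ hM0 hM q
    _ ≤ Real.exp X * X ^ (-(q : ℝ)) * (Real.exp (M * (P * X)) * Real.exp (F β * X)) := by
        gcongr
        · exact inv_factorial_le_exp_mul_rpow_neg (by linarith) q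
        · exact pow_le_exp_mul hM0 hq
        · nlinarith [Real.add_one_le_exp (F β * X)]
    _ = Real.exp ((F β + M * P + 1) * X) * X ^ (-(q : ℝ)) := by
        rw [← Real.exp_add, mul_right_comm, ← Real.exp_add]; congr 2; ring
    _ ≤ Real.exp (C * X) * X ^ (-(q : ℝ)) := by gcongr

lemma eventually_apply_add_intCast_le (hF : IsGammaModulus F) {β : ℂ} (hβ : ∀ l : ℤ, β ≠ l)
    (P : ℝ) :
    ∀ᶠ C : ℝ in atTop, ∀ X : ℝ, 1 ≤ X → ∀ k : ℤ, |(k : ℝ)| ≤ P * X →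
      F (β + k) ≤ Real.exp (C * X) * X ^ (k : ℝ) := by
  filter_upwards [hF.eventually_apply_add_natCast_le (fun n => mod_cast hβ (-n)) P,
    hF.eventually_apply_sub_natCast_le (fun n => mod_cast hβ n) P] with C hadd hsub X hX k hk
  obtain ⟨q, rfl | rfl⟩ := Int.eq_nat_or_neg k
  · simpa using hadd X hX q (by simpa using hk)
  · simpa [sub_eq_add_neg] using hsub X hX q (by simpa using hk)

lemma eventually_apply_add_ratCast_le (hF : IsGammaModulus F) (γ : ℂ) {S : Set ℚ}
    (hS : S.Finite) (P : ℝ) :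
    ∀ᶠ C : ℝ in atTop, ∀ X : ℝ, 1 ≤ X → ∀ s : ℚ, Int.fract s ∈ S → (∀ l : ℤ, γ + s ≠ l) →
      |(s : ℝ)| ≤ P * X → F (γ + s) ≤ Real.exp (C * X) * X ^ (s : ℝ) := by
  have hres : ∀ᶠ C : ℝ in atTop, ∀ r ∈ S, (∀ l : ℤ, γ + r ≠ l) →
      ∀ X : ℝ, 1 ≤ X → ∀ k : ℤ, |(k : ℝ)| ≤ (P + 1) * X →
        F (γ + r + k) ≤ Real.exp (C * X) * X ^ (k : ℝ) :=
    hS.eventually_all.2 fun r _ => eventually_imp_distrib_left.2 fun hr =>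
      hF.eventually_apply_add_intCast_le hr (P + 1)
  filter_upwards [hres] with C hC X hX s hs hγ hsP
  have hsplit : γ + s = γ + (Int.fract s : ℚ) + (⌊s⌋ : ℤ) := by
    rw [add_assoc]
    exact_mod_cast congrArg (fun q : ℚ => γ + q) (Int.fract_add_floor s).symm
  have hfract : ∀ l : ℤ, γ + (Int.fract s : ℚ) ≠ l := fun l hl =>
    hγ (l + ⌊s⌋) (by rw [hsplit, hl]; push_cast; rfl)
  have hfloor_le : ((⌊s⌋ : ℤ) : ℝ) ≤ s := mod_cast Int.floor_le s
  have hlt_floor : (s : ℝ) < (⌊s⌋ : ℤ) + 1 := mod_cast Int.lt_floor_add_one s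
  have hfloor : |((⌊s⌋ : ℤ) : ℝ)| ≤ (P + 1) * X := by
    rw [abs_le] at hsP ⊢
    constructor <;> linarith
  calc F (γ + s) ≤ Real.exp (C * X) * X ^ ((⌊s⌋ : ℤ) : ℝ) := by
        rw [hsplit]; exact hC _ hs hfract X hX _ hfloor
    _ ≤ Real.exp (C * X) * X ^ (s : ℝ) := by gcongr

end IsGammaModulus

lemma finite_range_fract_sum_mul_natCast {J : Type*} [Fintype J] (p : J → ℚ) :
    (Set.range fun m : J → ℕ => Int.fract (∑ j, p j * m j)).Finite := by
  refine (Set.finite_range fun r : ∀ j, Fin (p j).den =>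
    Int.fract (∑ j, p j * (r j : ℕ))).subset ?_
  rintro _ ⟨m, rfl⟩
  refine ⟨fun j => ⟨m j % (p j).den, Nat.mod_lt _ (p j).den_pos⟩, ?_⟩
  refine Int.fract_eq_fract.2 ⟨-∑ j, (p j).num * (m j / (p j).den : ℕ), ?_⟩
  simp only [Int.cast_neg, Int.cast_sum, Int.cast_mul, Int.cast_natCast]
  rw [← Finset.sum_sub_distrib, ← Finset.sum_neg_distrib]
  refine Finset.sum_congr rfl fun j _ => ?_
  have hdiv : (m j : ℚ) = (m j % (p j).den : ℕ) + (p j).den * (m j / (p j).den : ℕ) :=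
    mod_cast (Nat.mod_add_div (m j) (p j).den).symm
  rw [← Rat.mul_den_eq_num]
  linear_combination -(p j) * hdiv

lemma IsGammaModulus.eventually_apply_add_sum_le {J : Type*} [Fintype J] {F : ℂ → ℝ}
    (hF : IsGammaModulus F) (p : J → ℚ) {γ : ℂ}
    (hγ : ∀ (m : J → ℕ) (l : ℤ), γ + (∑ j, p j * m j : ℚ) ≠ l) :
    ∀ᶠ C : ℝ in atTop, ∀ X : ℝ, 1 ≤ X → ∀ m : J → ℕ, (∀ j, m j ≤ X) →
      F (γ + (∑ j, p j * m j : ℚ)) ≤ Real.exp (C * X) * X ^ ((∑ j, p j * m j : ℚ) : ℝ) := by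
  filter_upwards [hF.eventually_apply_add_ratCast_le γ (finite_range_fract_sum_mul_natCast p)
    (∑ j, |(p j : ℝ)|)] with C hC X hX m hm
  refine hC X hX _ (Set.mem_range_self m) (hγ m) ?_
  push_cast
  calc |∑ j, (p j : ℝ) * m j| ≤ ∑ j, |(p j : ℝ) * m j| := Finset.abs_sum_le_sum_abs _ _
    _ ≤ ∑ j, |(p j : ℝ)| * X := by
        gcongr with j
        rw [abs_mul, Nat.abs_cast]
        gcongr
        exact hm j
    _ = (∑ j, |(p j : ℝ)|) * X := (Finset.sum_mul _ _ _).symm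

section MultipleSeries

variable {I J : Type*} [Fintype I] [Fintype J] {p : I → J → ℚ} {F : I → ℂ → ℝ} {γ : I → ℂ}

lemma exists_prod_mul_prod_inv_factorial_le (hF : ∀ i, IsGammaModulus (F i))
    (hγ : ∀ (m : J → ℕ) (i : I) (l : ℤ), γ i + (∑ j, p i j * m j : ℚ) ≠ l) :
    ∃ C : ℝ, ∀ X : ℝ, 1 ≤ X → ∀ m : J → ℕ, (∀ j, m j ≤ X) →
      (∏ i, F i (γ i + (∑ j, p i j * m j : ℚ))) * ∏ j, ((m j)! : ℝ)⁻¹ ≤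
        Real.exp (C * X) * ∏ j, (X ^ (-(1 - ∑ i, (p i j : ℝ)))) ^ m j := by
  obtain ⟨C, hC⟩ := (eventually_all.2 fun i =>
    (hF i).eventually_apply_add_sum_le (p i) fun m => hγ m i).exists
  refine ⟨Fintype.card I * C + Fintype.card J, fun X hX m hm => ?_⟩
  have hX0 : 0 < X := by linarith
  have hexponent : ∑ i, ((∑ j, p i j * m j : ℚ) : ℝ) + ∑ j, -(m j : ℝ) =
      ∑ j, -(1 - ∑ i, (p i j : ℝ)) * m j := by
    push_cast
    rw [Finset.sum_comm, ← Finset.sum_add_distrib]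
    refine Finset.sum_congr rfl fun j _ => ?_
    rw [← Finset.sum_mul]
    ring
  calc (∏ i, F i (γ i + (∑ j, p i j * m j : ℚ))) * ∏ j, ((m j)! : ℝ)⁻¹
      ≤ (∏ i, Real.exp (C * X) * X ^ ((∑ j, p i j * m j : ℚ) : ℝ)) *
          ∏ j, Real.exp X * X ^ (-(m j : ℝ)) := by
        gcongr with i _ j
        · exact fun i _ => (hF i).nonneg _
        · exact hC i X hX m hm
        · exact inv_factorial_le_exp_mul_rpow_neg hX0 (m j)
    _ = Real.exp ((Fintype.card I * C + Fintype.card J) * X) *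
          X ^ (∑ i, ((∑ j, p i j * m j : ℚ) : ℝ) + ∑ j, -(m j : ℝ)) := by
        simp only [Finset.prod_mul_distrib, Finset.prod_const, Finset.card_univ]
        rw [add_mul, mul_assoc (Fintype.card I : ℝ), Real.exp_add, Real.exp_nat_mul,
          Real.exp_nat_mul, Real.rpow_add hX0, Real.rpow_sum_of_pos hX0, Real.rpow_sum_of_pos hX0]
        ring
    _ = Real.exp ((Fintype.card I * C + Fintype.card J) * X) *
          ∏ j, (X ^ (-(1 - ∑ i, (p i j : ℝ)))) ^ m j := by
        simp only [hexponent, Real.rpow_sum_of_pos hX0, Real.rpow_mul_natCast hX0.le]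

lemma exists_prod_mul_prod_inv_factorial_le_prod (hp : ∀ j, ∑ i, p i j ≤ 1)
    (hF : ∀ i, IsGammaModulus (F i))
    (hγ : ∀ (m : J → ℕ) (i : I) (l : ℤ), γ i + (∑ j, p i j * m j : ℚ) ≠ l) :
    ∃ Q : ℝ, 0 < Q ∧ ∀ m : J → ℕ,
      (∏ i, F i (γ i + (∑ j, p i j * m j : ℚ))) * ∏ j, ((m j)! : ℝ)⁻¹ ≤
        Q * ∏ j, (Q * ((m j : ℝ) + 1) ^ (-(1 - ∑ i, (p i j : ℝ)))) ^ m j := by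
  obtain ⟨C, hC⟩ := exists_prod_mul_prod_inv_factorial_le hF hγ
  refine ⟨Real.exp C, Real.exp_pos C, fun m => ?_⟩
  set X : ℝ := ∑ j, (m j : ℝ) + 1
  have hmX : ∀ j, (m j : ℝ) + 1 ≤ X := fun j =>
    add_le_add (Finset.single_le_sum (f := fun j => (m j : ℝ)) (fun j _ => by positivity)
      (Finset.mem_univ j)) le_rfl
  have hX1 : 1 ≤ X := le_add_of_nonneg_left (by positivity)
  have hsum_le : ∀ j, ∑ i, (p i j : ℝ) ≤ 1 := fun j => mod_cast hp j
  have hexp : Real.exp (C * X) = Real.exp C * ∏ j, Real.exp C ^ m j := by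
    rw [Finset.prod_pow_eq_pow_sum, ← Real.exp_nat_mul, ← Real.exp_add]
    congr 1
    push_cast
    ring
  calc (∏ i, F i (γ i + (∑ j, p i j * m j : ℚ))) * ∏ j, ((m j)! : ℝ)⁻¹
      ≤ Real.exp (C * X) * ∏ j, (X ^ (-(1 - ∑ i, (p i j : ℝ)))) ^ m j :=
        hC X hX1 m fun j => by linarith [hmX j]
    _ ≤ Real.exp (C * X) * ∏ j, (((m j : ℝ) + 1) ^ (-(1 - ∑ i, (p i j : ℝ)))) ^ m j := by
        gcongr Real.exp (C * X) * ∏ j, ?_ ^ m j with j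
        exact Real.rpow_le_rpow_of_nonpos (by positivity) (hmX j)
          (neg_nonpos.2 (sub_nonneg.2 (hsum_le j)))
    _ = Real.exp C * ∏ j, (Real.exp C *
          ((m j : ℝ) + 1) ^ (-(1 - ∑ i, (p i j : ℝ)))) ^ m j := by
        simp only [hexp, mul_pow, Finset.prod_mul_distrib, mul_assoc]

lemma summable_pi_prod_of_nonneg {g : J → ℕ → ℝ} (hg : ∀ j k, 0 ≤ g j k)
    (hs : ∀ j, Summable (g j)) : Summable fun m : J → ℕ => ∏ j, g j (m j) := by
  classical
  refine summable_of_sum_le (c := ∏ j, ∑' k, g j k)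
    (fun m => Finset.prod_nonneg fun j _ => hg j _) fun s => ?_
  calc ∑ m ∈ s, ∏ j, g j (m j)
      ≤ ∑ m ∈ Fintype.piFinset (fun j => s.image (· j)), ∏ j, g j (m j) := by
        refine Finset.sum_le_sum_of_subset_of_nonneg (fun m hm => ?_)
          fun m _ _ => Finset.prod_nonneg fun j _ => hg j _
        exact Fintype.mem_piFinset.2 fun j => Finset.mem_image_of_mem _ hm
    _ = ∏ j, ∑ k ∈ s.image (· j), g j k := (Finset.prod_univ_sum _ _).symm
    _ ≤ ∏ j, ∑' k, g j k := Finset.prod_le_prod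
        (fun j _ => Finset.sum_nonneg fun k _ => hg j k)
        fun j _ => (hs j).sum_le_tsum _ fun k _ => hg j k

lemma summable_pow_of_tendsto_zero {a : ℕ → ℝ} (ha : Tendsto a atTop (𝓝 0)) :
    Summable fun k => a k ^ k := by
  refine summable_geometric_two.of_norm_bounded_eventually_nat ?_
  have hsmall : ∀ᶠ k in atTop, ‖a k‖ ≤ 1 / 2 :=
    (by simpa using ha.norm : Tendsto (‖a ·‖) atTop (𝓝 0)).eventually_le_const (by norm_num)
  filter_upwards [hsmall] with k hk
  rw [norm_pow]
  gcongr

lemma summable_pow_mul_rpow_neg {a ε : ℝ} (ha : 0 ≤ a) (hε : 0 ≤ ε) (haε : ε = 0 → a < 1) :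
    Summable fun k : ℕ => (a * ((k : ℝ) + 1) ^ (-ε)) ^ k := by
  rcases hε.eq_or_lt' with rfl | hpos
  · simpa using summable_geometric_of_lt_one ha (haε rfl)
  · have hlim : Tendsto (fun k : ℕ => ((k : ℝ) + 1) ^ (-ε)) atTop (𝓝 0) :=
      (tendsto_rpow_neg_atTop hpos).comp
        (tendsto_atTop_add_const_right atTop 1 tendsto_natCast_atTop_atTop)
    exact summable_pow_of_tendsto_zero (by simpa using hlim.const_mul a)

lemma prod_rpow_neg_sum_mul_prod_pow {x : I → ℝ} (hx : ∀ i, 0 < x i) (y : J → ℝ) (m : J → ℕ) :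
    (∏ i, x i ^ (-((∑ j, p i j * m j : ℚ) : ℝ))) * ∏ j, y j ^ m j =
      ∏ j, (y j * ∏ i, x i ^ (-(p i j : ℝ))) ^ m j := by
  have hsplit : ∀ i, x i ^ (-((∑ j, p i j * m j : ℚ) : ℝ)) =
      ∏ j, (x i ^ (-(p i j : ℝ))) ^ m j := fun i => by
    push_cast
    simp only [← Finset.sum_neg_distrib, Real.rpow_sum_of_pos (hx i), ← neg_mul,
      Real.rpow_mul_natCast (hx i).le]
  simp only [hsplit, mul_pow, ← Finset.prod_pow, Finset.prod_mul_distrib]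
  rw [Finset.prod_comm, mul_comm]

theorem exists_radius_summable_prod (hp : ∀ j, ∑ i, p i j ≤ 1) (hF : ∀ i, IsGammaModulus (F i))
    (hγ : ∀ (m : J → ℕ) (i : I) (l : ℤ), γ i + (∑ j, p i j * m j : ℚ) ≠ l) :
    ∃ R : ℝ, 0 < R ∧ ∀ (x : I → ℝ) (y : J → ℝ), (∀ i, 0 < x i) → (∀ j, 0 ≤ y j) →
      (∀ j, ∑ i, p i j = 1 → y j * ∏ i, x i ^ (-(p i j : ℝ)) < R) →
      Summable fun m : J → ℕ =>
        ((∏ i, F i (γ i + (∑ j, p i j * m j : ℚ))) * ∏ j, ((m j)! : ℝ)⁻¹) *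
          ((∏ i, x i ^ (-((∑ j, p i j * m j : ℚ) : ℝ))) * ∏ j, y j ^ m j) := by
  obtain ⟨Q, hQ0, hQ⟩ := exists_prod_mul_prod_inv_factorial_le_prod hp hF hγ
  refine ⟨Q⁻¹, by positivity, fun x y hx hy hR => ?_⟩
  simp only [prod_rpow_neg_sum_mul_prod_pow hx]
  set w : J → ℝ := fun j => y j * ∏ i, x i ^ (-(p i j : ℝ))
  have hw0 : ∀ j, 0 ≤ w j := fun j =>
    mul_nonneg (hy j) (Finset.prod_nonneg fun i _ => Real.rpow_nonneg (hx i).le _)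
  have hcoord : ∀ j, Summable fun k : ℕ =>
      (Q * w j * ((k : ℝ) + 1) ^ (-(1 - ∑ i, (p i j : ℝ)))) ^ k := fun j => by
    refine summable_pow_mul_rpow_neg (mul_nonneg hQ0.le (hw0 j))
      (sub_nonneg.2 (mod_cast hp j)) fun hj => ?_
    rw [mul_comm, ← lt_inv_mul_iff₀' hQ0, mul_one]
    exact hR j (mod_cast (sub_eq_zero.1 hj).symm)
  have hterm0 : ∀ j (k : ℕ), 0 ≤ (Q * w j * ((k : ℝ) + 1) ^ (-(1 - ∑ i, (p i j : ℝ)))) ^ k :=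
    fun j k => pow_nonneg (mul_nonneg (mul_nonneg hQ0.le (hw0 j)) (by positivity)) k
  refine ((summable_pi_prod_of_nonneg hterm0 hcoord).mul_left Q).of_nonneg_of_le
    (fun m => ?_) fun m => ?_
  · exact mul_nonneg (mul_nonneg (Finset.prod_nonneg fun i _ => (hF i).nonneg _) (by positivity))
      (Finset.prod_nonneg fun j _ => pow_nonneg (hw0 j) _)
  · calc _ ≤ Q * (∏ j, (Q * ((m j : ℝ) + 1) ^ (-(1 - ∑ i, (p i j : ℝ)))) ^ m j) *
          ∏ j, w j ^ m j :=
          mul_le_mul_of_nonneg_right (hQ m) (Finset.prod_nonneg fun j _ => pow_nonneg (hw0 j) _)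
      _ = Q * ∏ j, (Q * w j * ((m j : ℝ) + 1) ^ (-(1 - ∑ i, (p i j : ℝ)))) ^ m j := by
          rw [mul_assoc, ← Finset.prod_mul_distrib]
          simp only [← mul_pow, mul_right_comm]

end MultipleSeries

/-- The modulus of the factor `Γ(w)` (if `u` holds) or `1 / Γ(1 - w)` (otherwise) that a coordinate
`w = p_{σ i}(c + A_{σ̄} m)` with `i ∈ σᵘ` or `i ∈ σᵈ` contributes to a term of the Γ-series. -/
noncomputable def gammaFactorNorm (u : Prop) [Decidable u] (w : ℂ) : ℝ :=
  if u then ‖Gamma w‖ else ‖Gamma (1 - w)‖⁻¹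

lemma isGammaModulus_gammaFactorNorm (u : Prop) [Decidable u] :
    IsGammaModulus (gammaFactorNorm u) := by
  unfold gammaFactorNorm
  split_ifs
  exacts [isGammaModulus_norm_Gamma, isGammaModulus_inv_norm_Gamma_one_sub]

lemma map_ratCast_mulVec_add_sum {I J K : Type*} [Fintype J] [Fintype K] (B : Matrix I K ℚ)
    (a : K → J → ℤ) (c : K → ℂ) (m : J → ℕ) (i : I) :
    (B.map (fun q : ℚ => (q : ℂ))).mulVec (fun r => c r + ∑ j, (a r j : ℂ) * (m j : ℂ)) i =
      (B.map (fun q : ℚ => (q : ℂ))).mulVec c i +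
        (∑ j, B.mulVec (fun r => (a r j : ℚ)) i * m j : ℚ) := by
  simp only [Matrix.mulVec, dotProduct, Matrix.map_apply, mul_add, Finset.sum_add_distrib]
  push_cast
  simp only [Finset.mul_sum, Finset.sum_mul, mul_assoc]
  rw [Finset.sum_comm]

lemma norm_exp_neg_add_ofReal_mul (g θ : ℂ) (s : ℝ) {r : ℝ} (hr : 0 < r)
    (hθ : θ.re = Real.log r) :
    ‖Complex.exp (-(g + s) * θ)‖ = ‖Complex.exp (-g * θ)‖ * r ^ (-s) := by
  rw [neg_add, add_mul, Complex.exp_add, norm_mul, ← ofReal_neg, norm_exp (((-s : ℝ) : ℂ) * θ),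
    re_ofReal_mul, hθ, Real.rpow_def_of_pos hr, mul_comm (Real.log r)]

section GammaSeries

/-- The coordinates `p_{σ i}(a(j))`, `j ∉ σ`, of the columns of `A` outside the simplex `σ`, where
`B` is the inverse of `A_σ`. -/
def complementCoord {n N : ℕ} {σ : Finset (Fin N)} (A : Matrix (Fin n) (Fin N) ℤ)
    (B : Matrix {i : Fin N // i ∈ σ} (Fin n) ℚ) (i : {i : Fin N // i ∈ σ})
    (j : {j : Fin N // j ∉ σ}) : ℚ :=
  B.mulVec (fun r => (A r j : ℚ)) i

variable {n N : ℕ} {A : Matrix (Fin n) (Fin N) ℤ} {σ σu σd : Finset (Fin N)}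
  {B : Matrix {i : Fin N // i ∈ σ} (Fin n) ℚ} {c : Fin n → ℂ}

lemma prod_gammaFactorNorm_eq (hpart : σu ∪ σd = σ) (hdisj : Disjoint σu σd)
    (w : {i : Fin N // i ∈ σ} → ℂ) :
    ∏ i, gammaFactorNorm (i.1 ∈ σu) (w i) =
      (∏ i : {i : Fin N // i ∈ σ}, ‖if i.1 ∈ σu then Gamma (w i) else 1‖) *
        (∏ i : {i : Fin N // i ∈ σ}, ‖if i.1 ∈ σd then Gamma (1 - w i) else 1‖)⁻¹ := by
  rw [← Finset.prod_inv_distrib, ← Finset.prod_mul_distrib]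
  refine Finset.prod_congr rfl fun i _ => ?_
  have hi : i.1 ∈ σu ∪ σd := hpart ▸ i.2
  rcases Finset.mem_union.1 hi with hu | hd
  · simp [gammaFactorNorm, hu, Finset.disjoint_left.1 hdisj hu]
  · simp [gammaFactorNorm, hd, Finset.disjoint_right.1 hdisj hd]

lemma exists_norm_gammaSeriesTerm_eq (hpart : σu ∪ σd = σ) (hdisj : Disjoint σu σd)
    {z : Fin N → ℂ} (hz : ∀ i ∈ σ, z i ≠ 0) :
    ∃ K : ℝ, ∀ m : {j : Fin N // j ∉ σ} → ℕ,
      ‖gammaSeriesTerm A σ σu σd (B.map (fun q : ℚ => (q : ℂ))) z c m‖ =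
        K * (((∏ i : {i : Fin N // i ∈ σ}, gammaFactorNorm (i.1 ∈ σu)
            ((B.map (fun q : ℚ => (q : ℂ))).mulVec c i +
              (∑ j, complementCoord A B i j * m j : ℚ))) *
          ∏ j, ((m j)! : ℝ)⁻¹) *
          ((∏ i : {i : Fin N // i ∈ σ}, ‖z i‖ ^
            (-((∑ j, complementCoord A B i j * m j : ℚ) : ℝ))) *
          ∏ j : {j : Fin N // j ∉ σ}, ‖z j‖ ^ m j)) := by
  set γ := (B.map (fun q : ℚ => (q : ℂ))).mulVec c
  set θ : {i : Fin N // i ∈ σ} → ℂ := fun i =>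
    log (z i) + (if i.1 ∈ σu then (Real.pi : ℂ) * I else 0) with hθ
  have hθre : ∀ i, (θ i).re = Real.log ‖z i‖ := fun i => by
    by_cases hi : i.1 ∈ σu <;> simp [hθ, hi, log_re]
  refine ⟨∏ i, ‖Complex.exp (-γ i * θ i)‖, fun m => ?_⟩
  set s : {i : Fin N // i ∈ σ} → ℚ := fun i => ∑ j, complementCoord A B i j * m j
  have hpc : ∀ i, (B.map (fun q : ℚ => (q : ℂ))).mulVec
      (fun r => c r + ∑ j : {j : Fin N // j ∉ σ}, (A r j : ℂ) * (m j : ℂ)) i = γ i + s i :=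
    map_ratCast_mulVec_add_sum B (fun r (j : {j : Fin N // j ∉ σ}) => A r j) c m
  have hexp : ∀ i, ‖Complex.exp (-(γ i + s i) * θ i)‖ =
      ‖Complex.exp (-γ i * θ i)‖ * ‖z i‖ ^ (-(s i : ℝ)) := fun i => by
    rw [← norm_exp_neg_add_ofReal_mul _ _ _ (norm_pos_iff.2 (hz i i.2)) (hθre i), ofReal_ratCast]
  simp only [gammaSeriesTerm, hpc, norm_mul, norm_div, norm_prod, norm_pow, norm_natCast]
  rw [prod_gammaFactorNorm_eq hpart hdisj, Finset.prod_congr rfl fun i _ => hexp i,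
    Finset.prod_mul_distrib, Finset.prod_inv_distrib, div_eq_mul_inv, mul_inv]
  ring

theorem gammaSeries_summable_on_domain_general (hpart : σu ∪ σd = σ) (hdisj : Disjoint σu σd)
    (hB1 : (Matrix.of fun r (i : {i : Fin N // i ∈ σ}) => ((A r i.1 : ℤ) : ℚ)) * B = 1)
    (hB2 : B * (Matrix.of fun r (i : {i : Fin N // i ∈ σ}) => ((A r i.1 : ℤ) : ℚ)) = 1)
    (hconv : ∀ j : Fin N, j ∉ σ →
      (∑ i : {i : Fin N // i ∈ σ}, B.mulVec (fun r => ((A r j : ℤ) : ℚ)) i) ≤ 1)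
    (hc : ∀ (m : {j : Fin N // j ∉ σ} → ℕ) (i : {i : Fin N // i ∈ σ}) (l : ℤ),
      (B.map (fun q : ℚ => (q : ℂ))).mulVec
        (fun r => c r + ∑ j : {j : Fin N // j ∉ σ}, (A r j : ℂ) * (m j : ℂ)) i ≠ l) :
    ∃ R : ℝ, 0 < R ∧ ∀ z : Fin N → ℂ, (∀ i ∈ σ, z i ≠ 0) →
      (∀ j : Fin N, j ∉ σ →
        (∑ i : {i : Fin N // i ∈ σ}, B.mulVec (fun r => ((A r j : ℤ) : ℚ)) i) = 1 →
        ‖z j‖ * ∏ i : {i : Fin N // i ∈ σ},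
          ‖z i.1‖ ^ (-((B.mulVec (fun r => ((A r j : ℤ) : ℚ)) i : ℚ) : ℝ)) < R) →
      Summable (fun m : {j : Fin N // j ∉ σ} → ℕ =>
        ‖gammaSeriesTerm A σ σu σd (B.map (fun q : ℚ => (q : ℂ))) z c m‖) := by
  have hγ : ∀ (m : {j : Fin N // j ∉ σ} → ℕ) (i : {i : Fin N // i ∈ σ}) (l : ℤ),
      (B.map (fun q : ℚ => (q : ℂ))).mulVec c i +
        (∑ j, complementCoord A B i j * m j : ℚ) ≠ l := fun m i l hl =>
    hc m i l ((map_ratCast_mulVec_add_sum B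
      (fun r (j : {j : Fin N // j ∉ σ}) => A r j) c m i).trans hl)
  obtain ⟨R, hR0, hR⟩ := exists_radius_summable_prod (p := complementCoord A B)
    (fun j => hconv j j.2)
    (fun i => isGammaModulus_gammaFactorNorm (i.1 ∈ σu)) hγ
  refine ⟨R, hR0, fun z hz hzR => ?_⟩
  obtain ⟨K, hK⟩ := exists_norm_gammaSeriesTerm_eq (A := A) (B := B) (c := c) hpart hdisj hz
  simp only [hK]
  exact (hR (fun i => ‖z i‖) (fun j => ‖z j‖) (fun i => norm_pos_iff.2 (hz i i.2))
    (fun j => norm_nonneg _) fun j => hzR j j.2).mul_left K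

end GammaSeries

/-- if every `j ∉ σ` satisfies `|A_σ^{-1}a(j)| ≤ 1` (convergent simplex)
and `c` is very generic, then there is `R > 0` such that the Γ-series
`ψ_{σ^d}^{σ^u}(z;c)` is absolutely summable at every `z` in the slit-plane polydomain
satisfying `|z_j|·∏_{i∈σ}|z_i|^{−p_{σ i}(a(j))} < R` for every `j ∉ σ` with
`|A_σ^{-1}a(j)| = 1`. -/
theorem gammaSeries_summable_on_domain {n N : ℕ} (hn : n < N)
    (A : Matrix (Fin n) (Fin N) ℤ)
    (σ σu σd : Finset (Fin N)) (hσcard : σ.card = n)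
    (hpart : σu ∪ σd = σ) (hdisj : Disjoint σu σd)
    (B : Matrix {i : Fin N // i ∈ σ} (Fin n) ℚ)
    (hB1 : (Matrix.of fun r (i : {i : Fin N // i ∈ σ}) => ((A r i.1 : ℤ) : ℚ)) * B = 1)
    (hB2 : B * (Matrix.of fun r (i : {i : Fin N // i ∈ σ}) => ((A r i.1 : ℤ) : ℚ)) = 1)
    (hconv : ∀ j : Fin N, j ∉ σ →
      (∑ i : {i : Fin N // i ∈ σ}, B.mulVec (fun r => ((A r j : ℤ) : ℚ)) i) ≤ 1)
    (c : Fin n → ℂ)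
    (hc : ∀ (k : Fin n → ℤ) (i : {i : Fin N // i ∈ σ}) (m : ℤ),
      (B.map (fun q : ℚ => (q : ℂ))).mulVec (fun r => c r + (k r : ℂ)) i ≠ (m : ℂ)) :
    ∃ R : ℝ, 0 < R ∧ ∀ z : Fin N → ℂ,
      (∀ j : Fin N, z j ∈ Complex.slitPlane) →
      (∀ j : Fin N, j ∉ σ →
        (∑ i : {i : Fin N // i ∈ σ}, B.mulVec (fun r => ((A r j : ℤ) : ℚ)) i) = 1 →
        ‖z j‖ * ∏ i : {i : Fin N // i ∈ σ},
          ‖z i.1‖ ^ (-((B.mulVec (fun r => ((A r j : ℤ) : ℚ)) i : ℚ) : ℝ)) < R) →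
      Summable (fun m : {j : Fin N // j ∉ σ} → ℕ =>
        ‖gammaSeriesTerm A σ σu σd (B.map (fun q : ℚ => (q : ℂ))) z c m‖) := by
  obtain ⟨R, hR0, hR⟩ := gammaSeries_summable_on_domain_general hpart hdisj hB1 hB2 hconv
    fun m i l => mod_cast hc (fun r => ∑ j : {j : Fin N // j ∉ σ}, A r j * m j) i l
  exact ⟨R, hR0, fun z hz => hR z fun i _ => slitPlane_ne_zero (hz i)⟩
end

section
/- Let A be an n×N integer matrix (n<N) with columns a(1),…,a(N), let σ ⊆ {1,…,N} be a simplex with partition σ = σ^u ⊔ σ^d, let c ∈ ℂ^n be very generic with respect to σ, and let U ⊆ (ℂ∖(-∞,0])^N be an open set on which the Γ-series ψ_{σ^d}^{σ^u}(z;c) is absolutely and locally uniformly summable. Then ψ_{σ^d}^{σ^u}(·;c) is holomorphic on U and satisfies the Euler equations: for every i = 1,…,n and every z ∈ U, Σ_{j=1}^N a_{ij} z_j (∂ψ_{σ^d}^{σ^u}/∂z_j)(z;c) + c_i ψ_{σ^d}^{σ^u}(z;c) = 0. -/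
open Complex

/-!
On the slit polydomain the term of index `m` is a constant multiple of a monomial `z ^ α`, where
`α` is `-p_{σ i}(c + A_{σ̄} m)` on `σ` and `m` on `σ̄`. Since `p_σ` is given by `A_σ⁻¹`, this exponent
satisfies `A α = -c`, which is Euler's homogeneity relation for each single term. The Schwarz
lemma turns the local summable bounds on the terms into bounds on their derivatives, so the
series may be differentiated term by term and its sum inherits the relation.
-/

open Metric
open scoped Matrix Topology

section TermwiseDerivative

variable {E F ι : Type*} [NormedAddCommGroup E] [NormedSpace ℂ E]
  [NormedAddCommGroup F] [NormedSpace ℂ F]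

theorem norm_fderiv_le_two_mul_div_of_norm_le {f : E → F} {z : E} {r M : ℝ} (hr : 0 < r)
    (hf : DifferentiableOn ℂ f (ball z r)) (hM : ∀ w ∈ ball z r, ‖f w‖ ≤ M) :
    ‖fderiv ℂ f z‖ ≤ 2 * M / r := by
  refine norm_fderiv_le_div_of_mapsTo_ball hf (fun w hw => ?_) hr
  rw [mem_closedBall, dist_eq_norm_sub, two_mul]
  exact norm_sub_le_of_le (hM w hw) (hM z (mem_ball_self hr))

theorem exists_ball_summable_norm_fderiv_le {f : ι → E → F} {g : ι → ℝ} {U : Set E} {z : E}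
    (hU : U ∈ 𝓝 z) (hf : ∀ m, DifferentiableOn ℂ (f m) U) (hg : Summable g)
    (hfg : ∀ᶠ w in 𝓝 z, ∀ m, ‖f m w‖ ≤ g m) :
    ∃ r > 0, ball z r ⊆ U ∧
      ∃ u : ι → ℝ, Summable u ∧ ∀ m, ∀ w ∈ ball z r, ‖fderiv ℂ (f m) w‖ ≤ u m := by
  obtain ⟨R, hR, hball⟩ := Metric.mem_nhds_iff.1 (Filter.inter_mem hU hfg)
  obtain ⟨hRU, hRg⟩ := Set.subset_inter_iff.1 hball
  have hr : 0 < R / 2 := half_pos hR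
  refine ⟨R / 2, hr, (ball_subset_ball (half_le_self hR.le)).trans hRU,
    fun m => 2 * g m / (R / 2), (hg.mul_left 2).div_const _, fun m w hw => ?_⟩
  have hwR : ball w (R / 2) ⊆ ball z R := ball_subset_ball' (by linarith [mem_ball.1 hw])
  exact norm_fderiv_le_two_mul_div_of_norm_le hr ((hf m).mono (hwR.trans hRU))
    fun y hy => hRg (hwR hy) m

variable [CompleteSpace F]

theorem hasFDerivAt_tsum_of_eventually_norm_le {f : ι → E → F} {g : ι → ℝ} {U : Set E} {z : E}
    (hU : U ∈ 𝓝 z) (hf : ∀ m, DifferentiableOn ℂ (f m) U) (hg : Summable g)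
    (hfg : ∀ᶠ w in 𝓝 z, ∀ m, ‖f m w‖ ≤ g m) :
    Summable (fun m => fderiv ℂ (f m) z) ∧
      HasFDerivAt (fun w => ∑' m, f m w) (∑' m, fderiv ℂ (f m) z) z := by
  obtain ⟨r, hr, hrU, u, hu, hfu⟩ := exists_ball_summable_norm_fderiv_le hU hf hg hfg
  have hz : z ∈ ball z r := mem_ball_self hr
  have hderiv : ∀ m, ∀ w ∈ ball z r, HasFDerivAt (f m) (fderiv ℂ (f m) w) w := fun m w hw =>
    (((hf m).mono hrU).differentiableAt (isOpen_ball.mem_nhds hw)).hasFDerivAt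
  exact ⟨.of_norm_bounded hu fun m => hfu m z hz,
    hasFDerivAt_tsum_of_isPreconnected hu isOpen_ball (convex_ball z r).isPreconnected
      hderiv hfu hz (.of_norm_bounded hg hfg.self_of_nhds) hz⟩

theorem fderiv_tsum_apply_eq_smul {f : ι → E → F} {g : ι → ℝ} {U : Set E} {z v : E} {l : ℂ}
    (hU : U ∈ 𝓝 z) (hf : ∀ m, DifferentiableOn ℂ (f m) U) (hg : Summable g)
    (hfg : ∀ᶠ w in 𝓝 z, ∀ m, ‖f m w‖ ≤ g m) (hfv : ∀ m, fderiv ℂ (f m) z v = l • f m z) :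
    fderiv ℂ (fun w => ∑' m, f m w) z v = l • ∑' m, f m z := by
  obtain ⟨hsum, hderiv⟩ := hasFDerivAt_tsum_of_eventually_norm_le hU hf hg hfg
  calc fderiv ℂ (fun w => ∑' m, f m w) z v
      = (∑' m, fderiv ℂ (f m) z) v := by rw [hderiv.fderiv]
    _ = ∑' m, fderiv ℂ (f m) z v := (ContinuousLinearMap.apply ℂ F v).map_tsum hsum
    _ = l • ∑' m, f m z := by simp only [hfv, tsum_const_smul'']

end TermwiseDerivative

section Monomial

variable {ν : Type*} [Fintype ν]

theorem hasFDerivAt_prod_cpow (α : ν → ℂ) {z : ν → ℂ} (hz : ∀ j, z j ∈ slitPlane) :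
    HasFDerivAt (fun w : ν → ℂ => ∏ j, w j ^ α j)
      ((∏ j, z j ^ α j) • ∑ j, α j • (z j)⁻¹ • ContinuousLinearMap.proj (R := ℂ) j) z := by
  have prod_eq_exp : ∀ w : ν → ℂ, (∀ j, w j ≠ 0) →
      ∏ j, w j ^ α j = exp (∑ j, α j * log (w j)) := fun w hw => by
    simp only [exp_sum, cpow_def_of_ne_zero (hw _), mul_comm]
  have hz₀ : ∀ j, z j ≠ 0 := fun j => slitPlane_ne_zero (hz j)
  have hlog : HasFDerivAt (fun w : ν → ℂ => ∑ j, α j * log (w j))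
      (∑ j, α j • (z j)⁻¹ • ContinuousLinearMap.proj (R := ℂ) j) z :=
    .fun_sum fun j _ => ((hasFDerivAt_apply (𝕜 := ℂ) j z).clog (hz j)).const_mul (α j)
  have hne : ∀ᶠ w in 𝓝 z, ∀ j, w j ≠ 0 := Filter.eventually_all.2 fun j =>
    (continuous_apply j).continuousAt.eventually_ne (hz₀ j)
  rw [prod_eq_exp z hz₀]
  exact hlog.cexp.congr_of_eventuallyEq (hne.mono prod_eq_exp)

theorem fderiv_prod_cpow_apply_mul (a α : ν → ℂ) {z : ν → ℂ} (hz : ∀ j, z j ∈ slitPlane) :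
    fderiv ℂ (fun w : ν → ℂ => ∏ j, w j ^ α j) z (a * z) = (a ⬝ᵥ α) * ∏ j, z j ^ α j := by
  have cancel : ∀ j, α j * ((z j)⁻¹ * (a j * z j)) = a j * α j := fun j => by
    field_simp [slitPlane_ne_zero (hz j)]
  rw [(hasFDerivAt_prod_cpow α hz).fderiv]
  simp only [smul_apply, sum_apply, ContinuousLinearMap.proj_apply, Pi.mul_apply, smul_eq_mul,
    cancel, dotProduct]
  exact mul_comm _ _

theorem sum_smul_apply_single [DecidableEq ν] {R M : Type*} [Semiring R] [AddCommMonoid M]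
    [Module R M] (L : (ν → R) →ₗ[R] M) (v : ν → R) : ∑ j, v j • L (Pi.single j 1) = L v := by
  conv_rhs => rw [pi_eq_sum_univ' v, map_sum]
  simp only [map_smul]

end Monomial

section SubsetSplitting

variable {ν : Type*} [Fintype ν] [DecidableEq ν] (σ : Finset ν)

@[to_additive]
theorem prod_mem_mul_prod_notMem {M : Type*} [CommMonoid M] (f : ν → M) :
    (∏ i : {i // i ∈ σ}, f i) * ∏ j : {j // j ∉ σ}, f j = ∏ i, f i := by
  convert Fintype.prod_subtype_mul_prod_subtype (· ∈ σ) f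

theorem mulVec_eq_submatrix_mulVec_add {ρ R : Type*} [NonUnitalNonAssocSemiring R]
    (A : Matrix ρ ν R) (v : ν → R) :
    A *ᵥ v = A.submatrix id (Subtype.val : {i // i ∈ σ} → ν) *ᵥ (fun i => v i) +
      A.submatrix id (Subtype.val : {j // j ∉ σ} → ν) *ᵥ (fun j => v j) :=
  funext fun r => (sum_mem_add_sum_notMem σ fun j => A r j * v j).symm

end SubsetSplitting

section Exponent

variable {ρ ν R : Type*} [Fintype ρ] [Fintype ν] [DecidableEq ν] [Ring R]

/-- The vector `p_σ(c + A_{σ̄} m)` of arguments of the Γ-factors in the term of index `m`; `B` plays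
the role of `A_σ⁻¹`. -/
def gammaArgument (A : Matrix ρ ν R) {σ : Finset ν} (B : Matrix {i // i ∈ σ} ρ R) (c : ρ → R)
    (m : {j // j ∉ σ} → ℕ) : {i // i ∈ σ} → R :=
  B *ᵥ (c + A.submatrix id Subtype.val *ᵥ fun j => (m j : R))

/-- The exponent vector of the monomial occurring in the term of index `m` of the Γ-series:
`-p_σ(c + A_{σ̄} m)` on `σ`, and `m` on its complement. -/
def gammaExponent (A : Matrix ρ ν R) {σ : Finset ν} (B : Matrix {i // i ∈ σ} ρ R) (c : ρ → R)
    (m : {j // j ∉ σ} → ℕ) : ν → R :=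
  fun i => if h : i ∈ σ then -gammaArgument A B c m ⟨i, h⟩ else m ⟨i, h⟩

theorem gammaExponent_coe (A : Matrix ρ ν R) {σ : Finset ν} (B : Matrix {i // i ∈ σ} ρ R)
    (c : ρ → R) (m : {j // j ∉ σ} → ℕ) (i : {i // i ∈ σ}) :
    gammaExponent A B c m i = -gammaArgument A B c m i :=
  dif_pos i.2

theorem gammaExponent_coe_compl (A : Matrix ρ ν R) {σ : Finset ν} (B : Matrix {i // i ∈ σ} ρ R)
    (c : ρ → R) (m : {j // j ∉ σ} → ℕ) (j : {j // j ∉ σ}) :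
    gammaExponent A B c m j = m j :=
  dif_neg j.2

theorem mulVec_gammaExponent [DecidableEq ρ] (A : Matrix ρ ν R) {σ : Finset ν}
    {B : Matrix {i // i ∈ σ} ρ R}
    (hB : A.submatrix id (Subtype.val : {i // i ∈ σ} → ν) * B = 1) (c : ρ → R)
    (m : {j // j ∉ σ} → ℕ) : A *ᵥ gammaExponent A B c m = -c := by
  have on_simplex : (fun i : {i // i ∈ σ} => gammaExponent A B c m i) = -gammaArgument A B c m :=
    funext (gammaExponent_coe A B c m)
  rw [mulVec_eq_submatrix_mulVec_add σ A, on_simplex]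
  simp only [gammaExponent_coe_compl]
  rw [Matrix.mulVec_neg, gammaArgument, Matrix.mulVec_mulVec, hB, Matrix.one_mulVec, neg_add,
    neg_add_cancel_right]

end Exponent

section Factorization

variable {n N : ℕ} (A : Matrix (Fin n) (Fin N) ℤ) (σ σu σd : Finset (Fin N))
  (B : Matrix {i : Fin N // i ∈ σ} (Fin n) ℂ) (c : Fin n → ℂ) (m : {j : Fin N // j ∉ σ} → ℕ)

/-- The factor of the term of index `m` of the Γ-series that does not depend on `z`; it includes
the phases `exp(-p_{σ i}(c + A_{σ̄} m) π i)` for `i ∈ σ^u`. -/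
noncomputable def gammaCoefficient : ℂ :=
  let p := gammaArgument (A.map Int.cast) B c m
  (∏ i : {i : Fin N // i ∈ σ}, if i.1 ∈ σu then Gamma (p i) else 1) /
    ((∏ i : {i : Fin N // i ∈ σ}, if i.1 ∈ σd then Gamma (1 - p i) else 1) *
      ∏ j : {j : Fin N // j ∉ σ}, ((m j).factorial : ℂ)) *
    ∏ i : {i : Fin N // i ∈ σ}, exp (-p i * if i.1 ∈ σu then (Real.pi : ℂ) * I else 0)

theorem gammaSeriesTerm_eq_gammaCoefficient_mul_prod_cpow {z : Fin N → ℂ}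
    (hz : ∀ i ∈ σ, z i ≠ 0) :
    gammaSeriesTerm A σ σu σd B z c m = gammaCoefficient A σ σu σd B c m *
      ∏ j, z j ^ gammaExponent (A.map Int.cast) B c m j := by
  have exp_eq : ∀ (i : {i : Fin N // i ∈ σ}) (p k : ℂ),
      exp (-p * (log (z i) + k)) = exp (-p * k) * z i ^ (-p) := fun i p k => by
    rw [cpow_def_of_ne_zero (hz i i.2), ← exp_add]
    ring_nf
  have argument_eq : (B *ᵥ fun r => c r + ∑ j : {j : Fin N // j ∉ σ}, (A r j.1 : ℂ) * (m j : ℂ)) =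
      gammaArgument (A.map Int.cast) B c m := rfl
  rw [← prod_mem_mul_prod_notMem σ]
  simp only [gammaSeriesTerm, gammaCoefficient, argument_eq, exp_eq, gammaExponent_coe,
    gammaExponent_coe_compl, cpow_natCast, Finset.prod_mul_distrib, mul_assoc]

end Factorization

theorem gammaSeries_euler_equations_general {ι ν ρ : Type*} [Fintype ν] [DecidableEq ν]
    (A : Matrix ρ ν ℂ) (c : ρ → ℂ) (b : ι → ℂ) (α : ι → ν → ℂ) (hα : ∀ m, A *ᵥ α m = -c)
    {U : Set (ν → ℂ)} (hUopen : IsOpen U) (hUslit : ∀ z ∈ U, ∀ j, z j ∈ slitPlane)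
    (f : ι → (ν → ℂ) → ℂ) (hf : ∀ m, ∀ z ∈ U, f m z = b m * ∏ j, z j ^ α m j)
    (hLocUnif : ∀ z ∈ U, ∃ g : ι → ℝ, Summable g ∧ ∀ᶠ w in 𝓝 z, ∀ m, ‖f m w‖ ≤ g m) :
    DifferentiableOn ℂ (fun z => ∑' m, f m z) U ∧
    ∀ i, ∀ z ∈ U,
      (∑ j, A i j * z j * fderiv ℂ (fun w => ∑' m, f m w) z (Pi.single j 1))
        + c i * ∑' m, f m z = 0 := by
  have hterm : ∀ m, ∀ z ∈ U, f m =ᶠ[𝓝 z] fun w => b m * ∏ j, w j ^ α m j := fun m z hz =>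
    Filter.eventuallyEq_of_mem (hUopen.mem_nhds hz) (hf m)
  have hmono : ∀ m, ∀ z ∈ U, DifferentiableAt ℂ (fun w : ν → ℂ => ∏ j, w j ^ α m j) z :=
    fun m z hz => (hasFDerivAt_prod_cpow (α m) (hUslit z hz)).differentiableAt
  have hdiff : ∀ m, DifferentiableOn ℂ (f m) U := fun m z hz =>
    (((hmono m z hz).const_mul (b m)).congr_of_eventuallyEq
      (hterm m z hz)).differentiableWithinAt
  have heuler : ∀ i, ∀ z ∈ U, ∀ m, fderiv ℂ (f m) z (A i * z) = -c i • f m z := by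
    intro i z hz m
    have hi : A i ⬝ᵥ α m = -c i := congrFun (hα m) i
    rw [(hterm m z hz).fderiv_eq, fderiv_const_mul (hmono m z hz), smul_apply,
      fderiv_prod_cpow_apply_mul (A i) (α m) (hUslit z hz), hi, hf m z hz]
    simp only [smul_eq_mul]
    ring
  refine ⟨fun z hz => ?_, fun i z hz => ?_⟩
  · obtain ⟨g, hg, hfg⟩ := hLocUnif z hz
    have hderiv := (hasFDerivAt_tsum_of_eventually_norm_le (hUopen.mem_nhds hz) hdiff hg hfg).2
    exact hderiv.differentiableAt.differentiableWithinAt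
  · obtain ⟨g, hg, hfg⟩ := hLocUnif z hz
    have hsum := fderiv_tsum_apply_eq_smul (hUopen.mem_nhds hz) hdiff hg hfg (heuler i z hz)
    have hsingle := sum_smul_apply_single
      (fderiv ℂ (fun w => ∑' m, f m w) z).toLinearMap (A i * z)
    simp only [Pi.mul_apply, smul_eq_mul, ContinuousLinearMap.coe_coe] at hsingle
    rw [hsingle, hsum, smul_eq_mul, neg_mul, neg_add_cancel]

/-- on an open set `U` (contained in the slit-plane polydomain) where the
Γ-series is absolutely and locally uniformly summable, its sum is holomorphic and
satisfies the Euler equations `Σ_j a_{ij} z_j ∂_j ψ + c_i ψ = 0`. -/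
theorem gammaSeries_euler_equations {n N : ℕ} (hn : n < N)
    (A : Matrix (Fin n) (Fin N) ℤ)
    (σ σu σd : Finset (Fin N)) (hσcard : σ.card = n)
    (hpart : σu ∪ σd = σ) (hdisj : Disjoint σu σd)
    (B : Matrix {i : Fin N // i ∈ σ} (Fin n) ℂ)
    (hB1 : (Matrix.of fun r (i : {i : Fin N // i ∈ σ}) => ((A r i.1 : ℤ) : ℂ)) * B = 1)
    (hB2 : B * (Matrix.of fun r (i : {i : Fin N // i ∈ σ}) => ((A r i.1 : ℤ) : ℂ)) = 1)
    (c : Fin n → ℂ)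
    (hc : ∀ (k : Fin n → ℤ) (i : {i : Fin N // i ∈ σ}) (m : ℤ),
      B.mulVec (fun r => c r + (k r : ℂ)) i ≠ (m : ℂ))
    (U : Set (Fin N → ℂ)) (hUopen : IsOpen U)
    (hUslit : ∀ z ∈ U, ∀ j : Fin N, z j ∈ Complex.slitPlane)
    (hAbs : ∀ z ∈ U, Summable (fun m : {j : Fin N // j ∉ σ} → ℕ =>
      ‖gammaSeriesTerm A σ σu σd B z c m‖))
    (hLocUnif : ∀ z₀ ∈ U, ∃ (V : Set (Fin N → ℂ)) (g : ({j : Fin N // j ∉ σ} → ℕ) → ℝ),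
      IsOpen V ∧ z₀ ∈ V ∧ V ⊆ U ∧ Summable g ∧
      ∀ z ∈ V, ∀ m : {j : Fin N // j ∉ σ} → ℕ,
        ‖gammaSeriesTerm A σ σu σd B z c m‖ ≤ g m) :
    DifferentiableOn ℂ
      (fun z => ∑' m : {j : Fin N // j ∉ σ} → ℕ, gammaSeriesTerm A σ σu σd B z c m) U ∧
    ∀ (i : Fin n), ∀ z ∈ U,
      (∑ j : Fin N, (A i j : ℂ) * z j *
        fderiv ℂ (fun w => ∑' m : {j : Fin N // j ∉ σ} → ℕ,
          gammaSeriesTerm A σ σu σd B w c m) z (Pi.single j 1))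
        + c i * ∑' m : {j : Fin N // j ∉ σ} → ℕ, gammaSeriesTerm A σ σu σd B z c m
      = 0 :=
  gammaSeries_euler_equations_general (A.map Int.cast) c
    (gammaCoefficient A σ σu σd B c) (gammaExponent (A.map Int.cast) B c)
    (mulVec_gammaExponent _ hB1 c) hUopen hUslit (fun m z => gammaSeriesTerm A σ σu σd B z c m)
    (fun m z hz => gammaSeriesTerm_eq_gammaCoefficient_mul_prod_cpow A σ σu σd B c m
      fun i _ => slitPlane_ne_zero (hUslit z hz i))
    fun z₀ hz₀ =>
      let ⟨_, g, hV, hzV, _, hg, hle⟩ := hLocUnif z₀ hz₀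
      ⟨g, hg, Filter.eventually_of_mem (hV.mem_nhds hzV) hle⟩
end

section
/- Let A be an n×N integer matrix (n<N) whose columns a(1),…,a(N) generate the lattice ℤ^n, let σ ⊆ {1,…,N} be a simplex with partition σ = σ^u ⊔ σ^d, let c ∈ ℂ^n be very generic with respect to σ, let r = [ℤ^n : A_σℤ^n], and let k(1),…,k(r) ∈ ℤ^{σ̄} be such that A_{σ̄}k(1),…,A_{σ̄}k(r) form a complete set of representatives of ℤ^n/A_σℤ^n. Let z ∈ (ℂ∖(-∞,0])^N be a point at which the Γ-series ψ_{σ^d}^{σ^u}(z;c) is absolutely summable. For k̃ ∈ ℤ^σ define ψ_{σ^d,k̃}^{σ^u}(z;c) as the Γ-series with Log z_i replaced by Log z_i + 2πi·k̃_i for each i ∈ σ, and for each l define φ_{σ^d,k(l)}^{σ^u}(z;c) as the sub-series of ψ_{σ^d}^{σ^u}(z;c) obtained by summing only over those m ∈ ℤ_{≥0}^{σ̄} with A_{σ̄}(m − k(l)) ∈ A_σℤ^n. Then ψ_{σ^d,k̃}^{σ^u}(z;c) = exp(−2πi·k̃^T A_σ^{-1}c) · Σ_{l=1}^r exp(−2πi·k̃^T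 A_σ^{-1}A_{σ̄}k(l)) · φ_{σ^d,k(l)}^{σ^u}(z;c). -/
open Complex

/-- The term of the Γ-series `ψ_{σ^d,k̃}^{σ^u}(z;c)` indexed by `m ∈ ℤ_{≥0}^{σ̄}`, where
the principal logarithm `Log z_i` is replaced by `Log z_i + 2πi·k̃_i` for `i ∈ σ`.
`B` is the inverse of `A_σ` as a complex matrix, so `p_{σ i}(v) = (B.mulVec v) i`. -/
noncomputable def gammaSeriesTermK {n N : ℕ} (A : Matrix (Fin n) (Fin N) ℤ)
    (σ σu σd : Finset (Fin N)) (B : Matrix {i : Fin N // i ∈ σ} (Fin n) ℂ)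
    (z : Fin N → ℂ) (c : Fin n → ℂ) (ktil : {i : Fin N // i ∈ σ} → ℤ)
    (m : {j : Fin N // j ∉ σ} → ℕ) : ℂ :=
  let pc : {i : Fin N // i ∈ σ} → ℂ :=
    B.mulVec (fun r => c r + ∑ j : {j : Fin N // j ∉ σ}, (A r j.1 : ℂ) * (m j : ℂ))
  (∏ i : {i : Fin N // i ∈ σ}, if i.1 ∈ σu then Complex.Gamma (pc i) else 1) /
    ((∏ i : {i : Fin N // i ∈ σ}, if i.1 ∈ σd then Complex.Gamma (1 - pc i) else 1) *
      ∏ j : {j : Fin N // j ∉ σ}, ((m j).factorial : ℂ)) *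
    (∏ i : {i : Fin N // i ∈ σ}, Complex.exp (-(pc i) *
      (Complex.log (z i.1) + 2 * (Real.pi : ℂ) * Complex.I * (ktil i : ℂ) +
        (if i.1 ∈ σu then (Real.pi : ℂ) * Complex.I else 0)))) *
    ∏ j : {j : Fin N // j ∉ σ}, z j.1 ^ (m j)

/-!
Shifting `Log z_i` by `2πi·k̃_i` multiplies the term of index `m` by `χ(c + A_σ̄ m)`, where
`χ(v) = exp(-2πi·k̃ᵀ A_σ⁻¹ v)`. This `χ` is a character of `ℂⁿ` which is trivial on `A_σ ℤ^σ`, since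
`A_σ⁻¹` sends that lattice to `ℤ^σ`. Hence `χ(c + A_σ̄ m) = χ(c) χ(A_σ̄ k(l))` whenever `m` lies in
the class of `k(l)`, and the series splits over the finitely many classes.
-/

section WeightedPartition

variable {α ι R : Type*} [Fintype ι] [Ring R] [UniformSpace R] [IsUniformAddGroup R]
  [IsTopologicalRing R] [CompleteSpace R] [T2Space R]

theorem tsum_mul_eq_sum_mul_tsum_of_existsUnique {g : α → R} (hg : Summable g)
    {P : ι → α → Prop} (hP : ∀ a, ∃! l, P l a) {w : α → R} {e : ι → R}
    (hw : ∀ l a, P l a → w a = e l) :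
    ∑' a, w a * g a = ∑ l, e l * ∑' a : {a // P l a}, g a := by
  have sum_weighted_indicator (a : α) :
      w a * g a = ∑ l, e l * {a | P l a}.indicator g a := by
    obtain ⟨l, hl, hunique⟩ := hP a
    rw [Fintype.sum_eq_single l fun l' hne => ?_, Set.indicator_of_mem (s := {a | P l a}) hl,
      hw l a hl]
    rw [Set.indicator_of_notMem (s := {a | P l' a}) fun h => hne (hunique l' h), mul_zero]
  calc ∑' a, w a * g a
      = ∑' a, ∑ l, e l * {a | P l a}.indicator g a := tsum_congr sum_weighted_indicator
    _ = ∑ l, ∑' a, e l * {a | P l a}.indicator g a :=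
        Summable.tsum_finsetSum fun l _ => (hg.indicator _).mul_left _
    _ = ∑ l, e l * ∑' a : {a // P l a}, g a := Finset.sum_congr rfl fun l _ => by
        rw [(hg.indicator _).tsum_mul_left]
        exact congrArg (e l * ·) (tsum_subtype {a | P l a} g).symm

end WeightedPartition

section TwistCharacter

open Matrix

variable {ρ ι κ : Type*} [Fintype ι] [Fintype κ]

/-- The congruence `M x ≡ M y` modulo the lattice `L ℤ^ι`, for integer vectors `x`, `y`; for
`L = A_σ` and `M = A_σ̄` its classes index the sub-series of the Γ-series. -/
def LatticeCongr (L : Matrix ρ ι ℤ) (M : Matrix ρ κ ℤ) (x y : κ → ℤ) : Prop :=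
  ∃ w : ι → ℤ, ∀ t, (M *ᵥ fun j => x j - y j) t = (L *ᵥ w) t

variable [Fintype ρ]

/-- The character `v ↦ exp(-2πi·kᵀ B v)` of `ℂ^ρ`; for `B = A_σ⁻¹` it is the factor by which
shifting the logarithms by `2πi·k` multiplies a term of the Γ-series. -/
noncomputable def twistChar (B : Matrix ι ρ ℂ) (k : ι → ℤ) : AddChar (ρ → ℂ) ℂ where
  toFun v := exp (-(2 * (Real.pi : ℂ) * I) * ∑ i, (k i : ℂ) * (B *ᵥ v) i)
  map_zero_eq_one' := by simp
  map_add_eq_mul' u v := by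
    simp only [mulVec_add, Pi.add_apply, mul_add, Finset.sum_add_distrib, exp_add]

theorem twistChar_apply (B : Matrix ι ρ ℂ) (k : ι → ℤ) (v : ρ → ℂ) :
    twistChar B k v = exp (-(2 * (Real.pi : ℂ) * I) * ∑ i, (k i : ℂ) * (B *ᵥ v) i) :=
  rfl

variable [DecidableEq ι] {B : Matrix ι ρ ℂ} {L : Matrix ρ ι ℤ}

theorem twistChar_map_mulVec_eq_one (hB : B * L.map (Int.cast : ℤ → ℂ) = 1) (k w : ι → ℤ) :
    twistChar B k (L.map (Int.cast : ℤ → ℂ) *ᵥ fun i => (w i : ℂ)) = 1 := by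
  rw [twistChar_apply, mulVec_mulVec, hB, one_mulVec, exp_eq_one_iff]
  exact ⟨-∑ i, k i * w i, by push_cast; ring⟩

theorem LatticeCongr.twistChar_eq {M : Matrix ρ κ ℤ} {x y : κ → ℤ} (h : LatticeCongr L M x y)
    (hB : B * L.map (Int.cast : ℤ → ℂ) = 1) (k : ι → ℤ) :
    twistChar B k (M.map (Int.cast : ℤ → ℂ) *ᵥ fun j => (x j : ℂ)) =
      twistChar B k (M.map (Int.cast : ℤ → ℂ) *ᵥ fun j => (y j : ℂ)) := by
  obtain ⟨w, hw⟩ := h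
  have eq_add_lattice : (M.map (Int.cast : ℤ → ℂ) *ᵥ fun j => (x j : ℂ)) =
      (M.map (Int.cast : ℤ → ℂ) *ᵥ fun j => (y j : ℂ)) +
        L.map (Int.cast : ℤ → ℂ) *ᵥ fun i => (w i : ℂ) := by
    ext t
    have hwt := congrArg (Int.cast : ℤ → ℂ) (hw t)
    simp only [mulVec, dotProduct, mul_sub, Finset.sum_sub_distrib, Int.cast_sub, Int.cast_sum,
      Int.cast_mul] at hwt
    exact sub_eq_iff_eq_add'.mp hwt
  rw [eq_add_lattice, AddChar.map_add_eq_mul, twistChar_map_mulVec_eq_one hB, mul_one]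

theorem tsum_twistChar_mul_eq_sum_latticeCongr {M : Matrix ρ κ ℤ} {Λ : Type*} [Fintype Λ]
    {kk : Λ → κ → ℤ} (hB : B * L.map (Int.cast : ℤ → ℂ) = 1)
    (hrep : ∀ m : κ → ℕ, ∃! l, LatticeCongr L M (fun j => (m j : ℤ)) (kk l))
    {g : (κ → ℕ) → ℂ} (hg : Summable g) (c : ρ → ℂ) (k : ι → ℤ) :
    ∑' m : κ → ℕ, twistChar B k (c + M.map (Int.cast : ℤ → ℂ) *ᵥ fun j => (m j : ℂ)) * g m =
      twistChar B k c * ∑ l, twistChar B k (M.map (Int.cast : ℤ → ℂ) *ᵥ fun j => (kk l j : ℂ)) *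
        ∑' m : {m : κ → ℕ // LatticeCongr L M (fun j => (m j : ℤ)) (kk l)}, g m := by
  simp_rw [AddChar.map_add_eq_mul, mul_assoc, tsum_mul_left]
  congr 1
  refine tsum_mul_eq_sum_mul_tsum_of_existsUnique hg hrep fun l m hm => ?_
  simpa only [Int.cast_natCast] using hm.twistChar_eq hB k

end TwistCharacter

section GammaSeries

open Matrix

/-- The submatrix `A_p` of the columns of `A` whose index satisfies `p`; the cases `p = (· ∈ σ)` and
`p = (· ∉ σ)` are the paper's `A_σ` and `A_σ̄`. -/
abbrev columns {n N : ℕ} (A : Matrix (Fin n) (Fin N) ℤ) (p : Fin N → Prop) :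
    Matrix (Fin n) {j // p j} ℤ :=
  A.submatrix id Subtype.val

variable {n N : ℕ} (A : Matrix (Fin n) (Fin N) ℤ) (σ σu σd : Finset (Fin N))
  (B : Matrix {i : Fin N // i ∈ σ} (Fin n) ℂ) (z : Fin N → ℂ) (c : Fin n → ℂ)
  (ktil : {i : Fin N // i ∈ σ} → ℤ)

theorem gammaSeriesTermK_eq_twistChar_mul (m : {j : Fin N // j ∉ σ} → ℕ) :
    gammaSeriesTermK A σ σu σd B z c ktil m =
      twistChar B ktil
          (c + (columns A (· ∉ σ)).map (Int.cast : ℤ → ℂ) *ᵥ fun j => (m j : ℂ)) *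
        gammaSeriesTermK A σ σu σd B z c (fun _ => 0) m := by
  rw [twistChar_apply]
  change _ = exp (_ * ∑ i, (ktil i : ℂ) * (B *ᵥ fun t => c t + ∑ j : {j : Fin N // j ∉ σ},
    (A t j.1 : ℂ) * (m j : ℂ)) i) * _
  unfold gammaSeriesTermK
  extract_lets p
  have exp_shift (i : {i : Fin N // i ∈ σ}) (s : ℂ) :
      exp (-(p i) * (log (z i.1) + 2 * (Real.pi : ℂ) * I * (ktil i : ℂ) + s)) =
        exp (-(2 * (Real.pi : ℂ) * I) * ((ktil i : ℂ) * p i)) *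
          exp (-(p i) * (log (z i.1) + 2 * (Real.pi : ℂ) * I * ((0 : ℤ) : ℂ) + s)) := by
    rw [← exp_add]
    congr 1
    push_cast
    ring
  simp_rw [exp_shift]
  rw [Finset.prod_mul_distrib, ← exp_sum, ← Finset.mul_sum]
  ring

variable {A σ σu σd B z c}

theorem gammaSeries_twist_decomposition_general (_hpart : σu ∪ σd = σ) (_hdisj : Disjoint σu σd)
    (hB : B * (columns A (· ∈ σ)).map (Int.cast : ℤ → ℂ) = 1)
    (_hpole : ∀ (m : {j : Fin N // j ∉ σ} → ℕ) (i : {i : Fin N // i ∈ σ}), i.1 ∈ σu → ∀ q : ℕ,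
      (B *ᵥ (c + (columns A (· ∉ σ)).map (Int.cast : ℤ → ℂ) *ᵥ fun j => (m j : ℂ))) i ≠ -(q : ℂ))
    {Λ : Type*} [Fintype Λ] {kk : Λ → {j : Fin N // j ∉ σ} → ℤ}
    (hrep : ∀ m : {j : Fin N // j ∉ σ} → ℕ, ∃! l,
      LatticeCongr (columns A (· ∈ σ)) (columns A (· ∉ σ)) (fun j => (m j : ℤ)) (kk l))
    (_hz : ∀ i ∈ σ, z i ≠ 0)
    (hsum : Summable (gammaSeriesTermK A σ σu σd B z c fun _ => 0)) :
    ∑' m, gammaSeriesTermK A σ σu σd B z c ktil m =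
      twistChar B ktil c *
        ∑ l, twistChar B ktil
            ((columns A (· ∉ σ)).map (Int.cast : ℤ → ℂ) *ᵥ fun j => (kk l j : ℂ)) *
          ∑' m : {m : {j : Fin N // j ∉ σ} → ℕ //
              LatticeCongr (columns A (· ∈ σ)) (columns A (· ∉ σ)) (fun j => (m j : ℤ)) (kk l)},
            gammaSeriesTermK A σ σu σd B z c (fun _ => 0) m := by
  rw [tsum_congr (gammaSeriesTermK_eq_twistChar_mul A σ σu σd B z c ktil)]
  exact tsum_twistChar_mul_eq_sum_latticeCongr hB hrep hsum c ktil

end GammaSeries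

/-- decomposition of the shifted Γ-series `ψ_{σ^d,k̃}^{σ^u}(z;c)` as an
exponential-weighted sum of the sub-series `φ_{σ^d,k(l)}^{σ^u}(z;c)` over a complete set
of representatives `A_σ̄ k(1),…,A_σ̄ k(r)` of `ℤⁿ/A_σℤⁿ`. -/
theorem gammaSeries_twist_decomposition {n N : ℕ} (hn : n < N)
    (A : Matrix (Fin n) (Fin N) ℤ)
    (hgen : ∀ v : Fin n → ℤ, ∃ u : Fin N → ℤ, ∀ t : Fin n, v t = ∑ j : Fin N, A t j * u j)
    (σ σu σd : Finset (Fin N)) (hσcard : σ.card = n)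
    (hpart : σu ∪ σd = σ) (hdisj : Disjoint σu σd)
    (B : Matrix {i : Fin N // i ∈ σ} (Fin n) ℂ)
    (hB1 : (Matrix.of fun r (i : {i : Fin N // i ∈ σ}) => ((A r i.1 : ℤ) : ℂ)) * B = 1)
    (hB2 : B * (Matrix.of fun r (i : {i : Fin N // i ∈ σ}) => ((A r i.1 : ℤ) : ℂ)) = 1)
    (c : Fin n → ℂ)
    (hc : ∀ (k : Fin n → ℤ) (i : {i : Fin N // i ∈ σ}) (m : ℤ),
      B.mulVec (fun r => c r + (k r : ℂ)) i ≠ (m : ℂ))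
    (r : ℕ) (kk : Fin r → ({j : Fin N // j ∉ σ} → ℤ))
    (hrep : ∀ v : Fin n → ℤ, ∃! l : Fin r, ∃ w : {i : Fin N // i ∈ σ} → ℤ,
      ∀ t : Fin n, v t - (∑ j : {j : Fin N // j ∉ σ}, A t j.1 * kk l j)
        = ∑ i : {i : Fin N // i ∈ σ}, A t i.1 * w i)
    (z : Fin N → ℂ) (hz : ∀ j : Fin N, z j ∈ Complex.slitPlane)
    (hsum : Summable (fun m : {j : Fin N // j ∉ σ} → ℕ =>
      ‖gammaSeriesTermK A σ σu σd B z c (fun _ => 0) m‖))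
    (ktil : {i : Fin N // i ∈ σ} → ℤ) :
    (∑' m : {j : Fin N // j ∉ σ} → ℕ, gammaSeriesTermK A σ σu σd B z c ktil m)
      = Complex.exp (-(2 * (Real.pi : ℂ) * Complex.I) *
          ∑ i : {i : Fin N // i ∈ σ}, (ktil i : ℂ) * B.mulVec c i) *
        ∑ l : Fin r,
          Complex.exp (-(2 * (Real.pi : ℂ) * Complex.I) *
            ∑ i : {i : Fin N // i ∈ σ}, (ktil i : ℂ) *
              B.mulVec (fun t => ∑ j : {j : Fin N // j ∉ σ},
                (A t j.1 : ℂ) * (kk l j : ℂ)) i) *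
          ∑' m : {mm : {j : Fin N // j ∉ σ} → ℕ //
              ∃ w : {i : Fin N // i ∈ σ} → ℤ,
                ∀ t : Fin n, (∑ j : {j : Fin N // j ∉ σ}, A t j.1 * ((mm j : ℤ) - kk l j))
                  = ∑ i : {i : Fin N // i ∈ σ}, A t i.1 * w i},
            gammaSeriesTermK A σ σu σd B z c (fun _ => 0) m.1 := by
  refine gammaSeries_twist_decomposition_general ktil hpart hdisj hB2 (fun m i _ q => ?_)
    (fun m => ?_) (fun i _ => Complex.slitPlane_ne_zero (hz i)) hsum.of_norm
  · simpa [Matrix.mulVec, dotProduct] using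
      hc ((columns A (· ∉ σ)).mulVec fun j => (m j : ℤ)) i (-q)
  · simpa only [LatticeCongr, Matrix.mulVec, dotProduct, Matrix.submatrix_apply, id_eq, mul_sub,
      Finset.sum_sub_distrib] using hrep ((columns A (· ∉ σ)).mulVec fun j => (m j : ℤ))
end

section
/- Let A be an n×N integer matrix whose columns a(1),…,a(N) span ℚ^n over ℚ, let a(N+1) ∈ ℤ^n, and let Ã = (A | a(N+1)) be the n×(N+1) matrix obtained by appending the column a(N+1). Let M be a left R_A-module, and equip the module M[[t]] of formal power series with coefficients in M with the left R_Ã-action in which z_j, ∂_j (1 ≤ j ≤ N), c_i, τ_i^{±1} act coefficientwise through the R_A-action on M, z_{N+1} acts as multiplication by t, and ∂_{N+1} acts as formal differentiation d/dt (this is a well-defined R_Ã-module structure). Then for every R_A-linear map f : GG(A) → M, the formal power series 𝔇f := Σ_{m=0}^∞ f([τ^{m·a(N+1)}]) · t^m/m! ∈ M[[t]] is annihilated by the left ideal I_Ã, i.e., E_i·(𝔇f) = 0 for i = 1,…,n (with E_i formed from Ã) and (∂_j − τ^{ã(j)})·(𝔇f) = 0 for j = 1,…,N+1; equivalently, there is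 a unique R_Ã-linear map F : GG(Ã) → M[[t]] with F([1]) = 𝔇f. -/
/-- Generators of the difference-differential ring `R_A`: `z j`, `∂ j`, `c i`,
`τ i` and `τ i ⁻¹`. -/
inductive GGGen (n N : ℕ) : Type
  | z (j : Fin N)
  | d (j : Fin N)
  | c (i : Fin n)
  | t (i : Fin n)
  | tinv (i : Fin n)

/-- The pairs of generators that do NOT commute by decree (their products are governed
by the explicit relations instead). -/
def GGGen.NonCommPair {n N : ℕ} : GGGen n N → GGGen n N → Prop
  | .t i, .c i' => i = i'
  | .c i, .t i' => i = i'
  | .tinv i, .c i' => i = i'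
  | .c i, .tinv i' => i = i'
  | .d j, .z j' => j = j'
  | .z j, .d j' => j = j'
  | .t i, .tinv i' => i = i'
  | .tinv i, .t i' => i = i'
  | _, _ => False

/-- The defining relations of `R_A` on the free algebra:
`τᵢcᵢ = (cᵢ+1)τᵢ`, `τᵢ⁻¹cᵢ = (cᵢ−1)τᵢ⁻¹`, `∂ⱼzⱼ = zⱼ∂ⱼ + 1`, `τᵢτᵢ⁻¹ = τᵢ⁻¹τᵢ = 1`,
and all other pairs of generators commute. -/
inductive GGRel (n N : ℕ) :
    FreeAlgebra ℂ (GGGen n N) → FreeAlgebra ℂ (GGGen n N) → Prop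
  | tc (i : Fin n) : GGRel n N
      (FreeAlgebra.ι ℂ (GGGen.t i) * FreeAlgebra.ι ℂ (GGGen.c i))
      ((FreeAlgebra.ι ℂ (GGGen.c i) + 1) * FreeAlgebra.ι ℂ (GGGen.t i))
  | tinvc (i : Fin n) : GGRel n N
      (FreeAlgebra.ι ℂ (GGGen.tinv i) * FreeAlgebra.ι ℂ (GGGen.c i))
      ((FreeAlgebra.ι ℂ (GGGen.c i) - 1) * FreeAlgebra.ι ℂ (GGGen.tinv i))
  | dz (j : Fin N) : GGRel n N
      (FreeAlgebra.ι ℂ (GGGen.d j) * FreeAlgebra.ι ℂ (GGGen.z j))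
      (FreeAlgebra.ι ℂ (GGGen.z j) * FreeAlgebra.ι ℂ (GGGen.d j) + 1)
  | ttinv (i : Fin n) : GGRel n N
      (FreeAlgebra.ι ℂ (GGGen.t i) * FreeAlgebra.ι ℂ (GGGen.tinv i)) 1
  | tinvt (i : Fin n) : GGRel n N
      (FreeAlgebra.ι ℂ (GGGen.tinv i) * FreeAlgebra.ι ℂ (GGGen.t i)) 1
  | comm (g h : GGGen n N) (hc : ¬ GGGen.NonCommPair g h) : GGRel n N
      (FreeAlgebra.ι ℂ g * FreeAlgebra.ι ℂ h)
      (FreeAlgebra.ι ℂ h * FreeAlgebra.ι ℂ g)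

/-- The ring `R_A` of difference-differential operators (it depends only on `n`, `N`). -/
abbrev GGRing (n N : ℕ) : Type := RingQuot (GGRel n N)

/-- The image of a generator in `R_A`. -/
noncomputable def GGRing.gen {n N : ℕ} (g : GGGen n N) : GGRing n N :=
  RingQuot.mkAlgHom ℂ (GGRel n N) (FreeAlgebra.ι ℂ g)

/-- `τᵢ^k` for `k ∈ ℤ`, using `τᵢ⁻¹` for negative exponents. -/
noncomputable def GGRing.tpow {n N : ℕ} (i : Fin n) (k : ℤ) : GGRing n N :=
  if 0 ≤ k then GGRing.gen (GGGen.t i) ^ k.toNat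
  else GGRing.gen (GGGen.tinv i) ^ (-k).toNat

/-- `τ^v = ∏ᵢ τᵢ^{vᵢ}` for `v ∈ ℤⁿ`. -/
noncomputable def GGRing.tauPow {n N : ℕ} (v : Fin n → ℤ) : GGRing n N :=
  (List.ofFn fun i => GGRing.tpow (N := N) i (v i)).prod

/-- The Euler operator `E_i = Σ_j a_{ij} z_j ∂_j + c_i` in `R_A`. -/
noncomputable def GGRing.euler {n N : ℕ} (A : Matrix (Fin n) (Fin N) ℤ) (i : Fin n) :
    GGRing n N :=
  (∑ j : Fin N, (A i j : GGRing n N) * GGRing.gen (GGGen.z j) * GGRing.gen (GGGen.d j))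
    + GGRing.gen (GGGen.c i)

/-- The left ideal `I_A ⊆ R_A` generated by the `E_i` and the `∂_j − τ^{a(j)}`. -/
noncomputable def GGIdeal {n N : ℕ} (A : Matrix (Fin n) (Fin N) ℤ) :
    Submodule (GGRing n N) (GGRing n N) :=
  Submodule.span (GGRing n N)
    (Set.range (GGRing.euler A) ∪
      Set.range (fun j : Fin N =>
        GGRing.gen (GGGen.d j) - GGRing.tauPow (fun i => A i j)))

/-- The GG system `GG(A) = R_A/I_A` as a left `R_A`-module. -/
abbrev GGModule {n N : ℕ} (A : Matrix (Fin n) (Fin N) ℤ) : Type :=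
  GGRing n N ⧸ GGIdeal A

/-!
The vector `x = f [1]` is killed by `I_A`, and `f [τ^v] = τ^v x`. Since `τ^v E_i = (E_i + v_i) τ^v`,
the coefficient `τ^{mw} x` of `t^m/m!`, where `w = a(N+1)`, is an eigenvector of `E_i` with
eigenvalue `-m w_i`, which the extra term `w_i t d/dt` of the Euler operator of `Ã` cancels.
The operators `∂_j` with `j ≤ N` commute with `τ`, so they act on `τ^{mw} x` as `τ^{a(j)}`. Finally,
`d/dt` shifts the coefficients of an exponential generating series by one step, and so does `τ^w`,
because `τ^w τ^{mw} = τ^{(m+1)w}`.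
-/

theorem prod_ofFn_mul_distrib_of_commute {R : Type*} [Monoid R] {m : ℕ} (F G : Fin m → R)
    (h : ∀ i j, Commute (F i) (G j)) :
    (List.ofFn fun i => F i * G i).prod = (List.ofFn F).prod * (List.ofFn G).prod := by
  induction m with
  | zero => simp
  | succ m ih =>
    have hc : Commute (List.ofFn fun i : Fin m => F i.succ).prod (G 0) := by
      refine Commute.list_prod_left _ _ fun x hx => ?_
      obtain ⟨i, rfl⟩ := List.mem_ofFn.1 hx
      exact h _ _
    simp only [List.ofFn_succ, List.prod_cons, ih _ _ fun i j => h i.succ j.succ]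
    exact hc.symm.mul_mul_mul_comm _ _

section SemiconjBy

variable {R : Type*} [Ring R] {a b x : R}

theorem semiconjBy_mul_add_intCast {k l : ℤ} (ha : SemiconjBy a x (x + k))
    (hb : SemiconjBy b x (x + l)) : SemiconjBy (a * b) x (x + ((k + l : ℤ) : R)) := by
  have h : SemiconjBy a (x + l) (x + k + l) := ha.add_right (Int.cast_commute l a).symm
  simpa only [Int.cast_add, add_assoc] using h.mul_left hb

theorem semiconjBy_pow_add_intCast {k : ℤ} (h : SemiconjBy a x (x + k)) (m : ℕ) :
    SemiconjBy (a ^ m) x (x + ((m * k : ℤ) : R)) := by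
  induction m with
  | zero => simp
  | succ m ih =>
    simpa only [pow_succ, Nat.cast_succ, add_one_mul] using semiconjBy_mul_add_intCast ih h

theorem semiconjBy_prod_ofFn_add_intCast {m : ℕ} {F : Fin m → R} {e : Fin m → ℤ}
    (h : ∀ j, SemiconjBy (F j) x (x + e j)) :
    SemiconjBy (List.ofFn F).prod x (x + ((∑ j, e j : ℤ) : R)) := by
  induction m with
  | zero => simp
  | succ m ih =>
    simpa only [List.ofFn_succ, List.prod_cons, Fin.sum_univ_succ] using
      semiconjBy_mul_add_intCast (h 0) (ih fun j => h j.succ)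

end SemiconjBy

/-- The operator `r` acts on the families `ι → M` (for `ι = ℕ`, the power series `M[[t]]`)
coefficientwise, through the action of `s` on `M`. -/
def ActsCoeffwise {R R' : Type*} (ι M : Type*) [Monoid R] [Monoid R'] [MulAction R M]
    [MulAction R' (ι → M)] (r : R') (s : R) : Prop :=
  ∀ (F : ι → M) (k : ι), (r • F) k = s • F k

namespace ActsCoeffwise

variable {R R' ι M : Type*} [Monoid R] [Monoid R'] [MulAction R M] [MulAction R' (ι → M)]
  {r r' : R'} {s s' : R}

theorem one : ActsCoeffwise ι M (1 : R') (1 : R) := fun F k => by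
  rw [one_smul, one_smul]

theorem mul (h : ActsCoeffwise ι M r s) (h' : ActsCoeffwise ι M r' s') :
    ActsCoeffwise ι M (r * r') (s * s') := fun F k => by
  rw [mul_smul, mul_smul, h, h']

theorem pow (h : ActsCoeffwise ι M r s) (m : ℕ) : ActsCoeffwise ι M (r ^ m) (s ^ m) := by
  induction m with
  | zero => simpa only [pow_zero] using one
  | succ m ih => simpa only [pow_succ] using ih.mul h

theorem prod_ofFn {m : ℕ} {r : Fin m → R'} {s : Fin m → R}
    (h : ∀ i, ActsCoeffwise ι M (r i) (s i)) :
    ActsCoeffwise ι M (List.ofFn r).prod (List.ofFn s).prod := by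
  induction m with
  | zero => simpa only [List.ofFn_zero, List.prod_nil] using one
  | succ m ih =>
    simpa only [List.ofFn_succ, List.prod_cons] using (h 0).mul (ih fun i => h i.succ)

end ActsCoeffwise

section ExpSeries

variable {K R M : Type*} [Field K] [Ring R] [Algebra K R] [AddCommGroup M] [Module R M]

variable (K R) in
/-- The exponential generating series `∑ u_m t^m / m!` in `M[[t]]`, given by its coefficients.
The scalars of `K` act on `M` through `R`. -/
def expSeries (u : ℕ → M) : ℕ → M :=
  fun m => algebraMap K R (m.factorial : K)⁻¹ • u m

theorem smul_expSeries_apply (r : R) (u : ℕ → M) (m : ℕ) :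
    r • expSeries K R u m = algebraMap K R (m.factorial : K)⁻¹ • r • u m := by
  rw [expSeries, ← mul_smul, ← Algebra.commutes, mul_smul]

theorem succ_nsmul_expSeries_succ [CharZero K] (u : ℕ → M) (m : ℕ) :
    (m + 1) • expSeries K R u (m + 1) = expSeries K R (fun k => u (k + 1)) m := by
  have hfac : ((m + 1 : ℕ) : K) * ((m + 1).factorial : K)⁻¹ = (m.factorial : K)⁻¹ := by
    rw [Nat.factorial_succ, Nat.cast_mul, mul_inv,
      mul_inv_cancel_left₀ (Nat.cast_ne_zero.2 m.succ_ne_zero)]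
  rw [expSeries, expSeries, ← Nat.cast_smul_eq_nsmul R, ← map_natCast (algebraMap K R),
    ← mul_smul, ← map_mul, hfac]

theorem ActsCoeffwise.smul_expSeries {R' : Type*} [Monoid R'] [MulAction R' (ℕ → M)] {r : R'}
    {s : R} (h : ActsCoeffwise ℕ M r s) (u : ℕ → M) :
    r • expSeries K R u = expSeries K R (fun m => s • u m) :=
  funext fun m => (h _ m).trans (smul_expSeries_apply s u m)

end ExpSeries

/-- The matrix `(A | w)` obtained by appending the column `w` to `A`. -/
def appendColumn {ι α : Type*} {N : ℕ} (A : Matrix ι (Fin N) α) (w : ι → α) :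
    Matrix ι (Fin (N + 1)) α :=
  fun i => Fin.snoc (A i) (w i)

namespace GGRing

variable {n N : ℕ}

theorem gen_commute (g h : GGGen n N) (hc : ¬ GGGen.NonCommPair g h) :
    Commute (gen g) (gen h) := by
  simpa only [gen, Commute, SemiconjBy, map_mul] using RingQuot.mkAlgHom_rel ℂ (GGRel.comm g h hc)

theorem semiconjBy_gen_t_gen_c (i : Fin n) :
    SemiconjBy (gen (N := N) (.t i)) (gen (.c i)) (gen (.c i) + 1) := by
  simpa only [gen, SemiconjBy, map_mul, map_add, map_one] using
    RingQuot.mkAlgHom_rel ℂ (GGRel.tc (N := N) i)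

theorem semiconjBy_gen_tinv_gen_c (i : Fin n) :
    SemiconjBy (gen (N := N) (.tinv i)) (gen (.c i)) (gen (.c i) - 1) := by
  simpa only [gen, SemiconjBy, map_mul, map_sub, map_one] using
    RingQuot.mkAlgHom_rel ℂ (GGRel.tinvc (N := N) i)

/-- The generator `τᵢ` as a unit of `R_A`, so that `τᵢ^k` is a power in the group of units. -/
noncomputable def tUnit (i : Fin n) : (GGRing n N)ˣ where
  val := gen (.t i)
  inv := gen (.tinv i)
  val_inv := by
    simpa only [gen, map_mul, map_one] using RingQuot.mkAlgHom_rel ℂ (GGRel.ttinv (N := N) i)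
  inv_val := by
    simpa only [gen, map_mul, map_one] using RingQuot.mkAlgHom_rel ℂ (GGRel.tinvt (N := N) i)

theorem tpow_eq_zpow (i : Fin n) (k : ℤ) :
    tpow i k = ((tUnit i ^ k : (GGRing n N)ˣ) : GGRing n N) := by
  unfold tpow
  split_ifs with hk
  · lift k to ℕ using hk
    rfl
  · obtain ⟨m, rfl⟩ : ∃ m : ℕ, k = -m := ⟨(-k).toNat, by omega⟩
    rw [zpow_neg, ← inv_zpow, neg_neg, Int.toNat_natCast, zpow_natCast, Units.val_pow_eq_pow_val]
    rfl

theorem tpow_commute_of_gen_commute {i : Fin n} {x : GGRing n N}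
    (h : Commute (gen (.t i)) x) (h' : Commute (gen (.tinv i)) x) (k : ℤ) :
    Commute (tpow i k) x := by
  unfold tpow
  split_ifs
  · exact h.pow_left _
  · exact h'.pow_left _

theorem tpow_commute_tpow (i j : Fin n) (k l : ℤ) :
    Commute (tpow (N := N) i k) (tpow j l) := by
  have h : Commute (tUnit (N := N) i) (tUnit j) := Units.ext (gen_commute (.t i) (.t j) not_false)
  rw [tpow_eq_zpow, tpow_eq_zpow]
  exact (h.zpow_zpow k l).units_val

theorem semiconjBy_tpow_gen_c (i : Fin n) (k : ℤ) :
    SemiconjBy (tpow (N := N) i k) (gen (.c i)) (gen (.c i) + (k : GGRing n N)) := by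
  have ht : SemiconjBy (gen (N := N) (.t i)) (gen (.c i))
      (gen (.c i) + ((1 : ℤ) : GGRing n N)) := by
    simpa only [Int.cast_one] using semiconjBy_gen_t_gen_c i
  have htinv : SemiconjBy (gen (N := N) (.tinv i)) (gen (.c i))
      (gen (.c i) + ((-1 : ℤ) : GGRing n N)) := by
    simpa only [Int.cast_neg, Int.cast_one, ← sub_eq_add_neg] using semiconjBy_gen_tinv_gen_c i
  unfold tpow
  split_ifs with hk
  · simpa only [mul_one, Int.toNat_of_nonneg hk] using semiconjBy_pow_add_intCast ht k.toNat
  · simpa only [Int.toNat_of_nonneg (show 0 ≤ -k by omega), neg_mul_neg, mul_one] using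
      semiconjBy_pow_add_intCast htinv (-k).toNat

theorem tauPow_add (u v : Fin n → ℤ) : tauPow (N := N) (u + v) = tauPow u * tauPow v := by
  unfold tauPow
  rw [← prod_ofFn_mul_distrib_of_commute _ _ fun i j => tpow_commute_tpow i j _ _]
  simp only [tpow_eq_zpow, Pi.add_apply, zpow_add, Units.val_mul]

theorem tauPow_commute (u v : Fin n → ℤ) : Commute (tauPow (N := N) u) (tauPow v) := by
  rw [Commute, SemiconjBy, ← tauPow_add, ← tauPow_add, add_comm]

theorem tauPow_commute_of_gen_commute {x : GGRing n N}
    (h : ∀ i, Commute (gen (.t i)) x) (h' : ∀ i, Commute (gen (.tinv i)) x)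
    (v : Fin n → ℤ) : Commute (tauPow v) x := by
  refine Commute.list_prod_left _ _ fun y hy => ?_
  obtain ⟨i, rfl⟩ := List.mem_ofFn.1 hy
  exact tpow_commute_of_gen_commute (h i) (h' i) _

theorem tauPow_commute_gen_d (v : Fin n → ℤ) (j : Fin N) : Commute (tauPow v) (gen (.d j)) :=
  tauPow_commute_of_gen_commute (fun i => gen_commute (.t i) (.d j) not_false)
    (fun i => gen_commute (.tinv i) (.d j) not_false) v

theorem tauPow_commute_gen_z (v : Fin n → ℤ) (j : Fin N) : Commute (tauPow v) (gen (.z j)) :=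
  tauPow_commute_of_gen_commute (fun i => gen_commute (.t i) (.z j) not_false)
    (fun i => gen_commute (.tinv i) (.z j) not_false) v

theorem semiconjBy_tauPow_gen_c (v : Fin n → ℤ) (i : Fin n) :
    SemiconjBy (tauPow (N := N) v) (gen (.c i)) (gen (.c i) + (v i : GGRing n N)) := by
  have htpow (j : Fin n) : SemiconjBy (tpow (N := N) j (v j)) (gen (.c i))
      (gen (.c i) + ((if j = i then v j else 0 : ℤ) : GGRing n N)) := by
    split_ifs with hj
    · subst hj
      exact semiconjBy_tpow_gen_c j _
    · rw [Int.cast_zero, add_zero]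
      exact tpow_commute_of_gen_commute
        (gen_commute (.t j) (.c i) hj) (gen_commute (.tinv j) (.c i) hj) _
  simpa only [tauPow, Finset.sum_ite_eq', Finset.mem_univ, if_true] using
    semiconjBy_prod_ofFn_add_intCast htpow

theorem semiconjBy_tauPow_euler (A : Matrix (Fin n) (Fin N) ℤ) (v : Fin n → ℤ) (i : Fin n) :
    SemiconjBy (tauPow v) (euler A i) (euler A i + (v i : GGRing n N)) := by
  have hsum : Commute (tauPow v)
      (∑ j : Fin N, (A i j : GGRing n N) * gen (.z j) * gen (.d j)) :=
    Commute.sum_right _ _ _ fun j _ =>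
      ((Int.cast_commute (A i j) (tauPow v)).symm.mul_right (tauPow_commute_gen_z v j)).mul_right
        (tauPow_commute_gen_d v j)
  rw [euler, add_assoc]
  exact SemiconjBy.add_right hsum (semiconjBy_tauPow_gen_c v i)

/-- The given action of `R_Ã` on `ℕ → M` is the one on power series `M[[t]]`, identified with their
sequences of coefficients: the generators of `R_A` act coefficientwise, `z_{N+1}` acts as
multiplication by `t`, and `∂_{N+1}` as `d/dt`. -/
structure IsPowerSeriesAction (n N : ℕ) (M : Type*) [AddCommGroup M] [Module (GGRing n N) M]
    [Module (GGRing n (N + 1)) (ℕ → M)] : Prop where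
  z (j : Fin N) : ActsCoeffwise ℕ M (gen (n := n) (.z j.castSucc)) (gen (n := n) (.z j))
  d (j : Fin N) : ActsCoeffwise ℕ M (gen (n := n) (.d j.castSucc)) (gen (n := n) (.d j))
  c (i : Fin n) : ActsCoeffwise ℕ M (gen (N := N + 1) (.c i)) (gen (N := N) (.c i))
  t (i : Fin n) : ActsCoeffwise ℕ M (gen (N := N + 1) (.t i)) (gen (N := N) (.t i))
  tinv (i : Fin n) : ActsCoeffwise ℕ M (gen (N := N + 1) (.tinv i)) (gen (N := N) (.tinv i))
  z_last (F : ℕ → M) : (gen (n := n) (.z (Fin.last N)) • F) 0 = 0 ∧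
    ∀ k : ℕ, (gen (n := n) (.z (Fin.last N)) • F) (k + 1) = F k
  d_last (F : ℕ → M) (k : ℕ) : (gen (n := n) (.d (Fin.last N)) • F) k = (k + 1) • F (k + 1)

namespace IsPowerSeriesAction

variable {M : Type*} [AddCommGroup M] [Module (GGRing n N) M] [Module (GGRing n (N + 1)) (ℕ → M)]

theorem tauPow (h : IsPowerSeriesAction n N M) (v : Fin n → ℤ) :
    ActsCoeffwise ℕ M (tauPow (N := N + 1) v) (tauPow (N := N) v) := by
  refine ActsCoeffwise.prod_ofFn fun i => ?_
  unfold tpow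
  split_ifs
  · exact (h.t i).pow _
  · exact (h.tinv i).pow _

theorem z_last_smul_d_last_smul_apply (h : IsPowerSeriesAction n N M) (F : ℕ → M) (k : ℕ) :
    (gen (n := n) (.z (Fin.last N)) • gen (n := n) (.d (Fin.last N)) • F) k = k • F k := by
  cases k with
  | zero => rw [(h.z_last _).1, zero_smul]
  | succ k => rw [(h.z_last _).2, h.d_last]

theorem euler_appendColumn_smul_apply (h : IsPowerSeriesAction n N M)
    (A : Matrix (Fin n) (Fin N) ℤ) (w : Fin n → ℤ) (i : Fin n) (F : ℕ → M) (k : ℕ) :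
    (euler (appendColumn A w) i • F) k
      = (euler A i + (((k • w) i : ℤ) : GGRing n N)) • F k := by
  simp only [euler, appendColumn, Fin.sum_univ_castSucc, Fin.snoc_castSucc, Fin.snoc_last,
    add_smul, Finset.sum_smul, mul_smul, Int.cast_smul_eq_zsmul, Pi.add_apply, Finset.sum_apply,
    Pi.smul_apply, h.z _ _ _, h.d _ _ _, h.c _ _ _, h.z_last_smul_d_last_smul_apply,
    smul_assoc, smul_comm (w i) k]
  exact add_right_comm _ _ _

theorem d_last_smul_expSeries (h : IsPowerSeriesAction n N M) (u : ℕ → M) :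
    gen (n := n) (.d (Fin.last N)) • expSeries ℂ (GGRing n N) u
      = expSeries ℂ (GGRing n N) (fun k => u (k + 1)) :=
  funext fun k => (h.d_last _ k).trans (succ_nsmul_expSeries_succ u k)

end IsPowerSeriesAction

end GGRing

/-- The element `x` of an `R_A`-module satisfies the equations of the GG system of `A`, i.e. the
generators of the left ideal `I_A` annihilate it. -/
structure IsGGSolution {n N : ℕ} (A : Matrix (Fin n) (Fin N) ℤ) {P : Type*} [AddCommGroup P]
    [Module (GGRing n N) P] (x : P) : Prop where
  euler_smul (i : Fin n) : GGRing.euler A i • x = 0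
  d_sub_tauPow_smul (j : Fin N) :
    (GGRing.gen (.d j) - GGRing.tauPow (fun i => A i j)) • x = 0

theorem GGModule.isGGSolution_mk_one {n N : ℕ} (A : Matrix (Fin n) (Fin N) ℤ) :
    IsGGSolution A (Submodule.Quotient.mk 1 : GGModule A) := by
  have hmem {r : GGRing n N} (hr : r ∈ GGIdeal A) :
      r • (Submodule.Quotient.mk 1 : GGModule A) = 0 := by
    rwa [← Submodule.Quotient.mk_smul, smul_eq_mul, mul_one, Submodule.Quotient.mk_eq_zero]
  exact ⟨fun i => hmem (Submodule.subset_span (.inl ⟨i, rfl⟩)),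
    fun j => hmem (Submodule.subset_span (.inr ⟨j, rfl⟩))⟩

namespace IsGGSolution

open GGRing

variable {n N : ℕ} {A : Matrix (Fin n) (Fin N) ℤ} {P : Type*} [AddCommGroup P]
  [Module (GGRing n N) P] {x : P}

theorem map {Q : Type*} [AddCommGroup Q] [Module (GGRing n N) Q] (hx : IsGGSolution A x)
    (f : P →ₗ[GGRing n N] Q) : IsGGSolution A (f x) where
  euler_smul i := by rw [← map_smul, hx.euler_smul, map_zero]
  d_sub_tauPow_smul j := by rw [← map_smul, hx.d_sub_tauPow_smul, map_zero]

theorem d_smul (hx : IsGGSolution A x) (j : Fin N) :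
    gen (n := n) (.d j) • x = tauPow (N := N) (fun i => A i j) • x :=
  sub_eq_zero.1 <| (sub_smul _ _ x).symm.trans (hx.d_sub_tauPow_smul j)

theorem euler_add_smul_tauPow_smul (hx : IsGGSolution A x) (v : Fin n → ℤ) (i : Fin n) :
    (euler A i + (v i : GGRing n N)) • tauPow (N := N) v • x = 0 := by
  rw [← mul_smul, ← (semiconjBy_tauPow_euler A v i).eq, mul_smul, hx.euler_smul, smul_zero]

theorem d_smul_tauPow_smul (hx : IsGGSolution A x) (v : Fin n → ℤ) (j : Fin N) :
    gen (n := n) (.d j) • tauPow (N := N) v • x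
      = tauPow (N := N) (fun i => A i j) • tauPow (N := N) v • x := by
  rw [← mul_smul, ← (tauPow_commute_gen_d v j).eq, mul_smul, hx.d_smul, ← mul_smul,
    (tauPow_commute v _).eq, mul_smul]

theorem existsUnique_linearMap (hx : IsGGSolution A x) :
    ∃! F : GGModule A →ₗ[GGRing n N] P, F (Submodule.Quotient.mk 1) = x := by
  have hle : GGIdeal A ≤ LinearMap.ker (LinearMap.toSpanSingleton (GGRing n N) P x) := by
    refine Submodule.span_le.2 ?_
    rintro _ (⟨i, rfl⟩ | ⟨j, rfl⟩)
    · exact hx.euler_smul i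
    · exact hx.d_sub_tauPow_smul j
  refine ⟨(GGIdeal A).liftQ _ hle, one_smul _ x, fun G hG => ?_⟩
  refine Submodule.linearMap_qext _ (LinearMap.ext_ring ?_)
  exact hG.trans (one_smul _ x).symm

theorem expSeries_tauPow_smul [Module (GGRing n (N + 1)) (ℕ → P)]
    (hP : IsPowerSeriesAction n N P) (hx : IsGGSolution A x) (w : Fin n → ℤ) :
    IsGGSolution (appendColumn A w)
      (expSeries ℂ (GGRing n N) fun m => tauPow (N := N) (m • w) • x) where
  euler_smul i := by
    ext k
    rw [hP.euler_appendColumn_smul_apply, smul_expSeries_apply, hx.euler_add_smul_tauPow_smul,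
      smul_zero, Pi.zero_apply]
  d_sub_tauPow_smul j := by
    rw [sub_smul, sub_eq_zero, (hP.tauPow _).smul_expSeries]
    cases j using Fin.lastCases with
    | last =>
      simp only [hP.d_last_smul_expSeries, appendColumn, Fin.snoc_last, ← mul_smul, ← tauPow_add,
        succ_nsmul']
    | cast j =>
      simp only [(hP.d j).smul_expSeries, appendColumn, Fin.snoc_castSucc, hx.d_smul_tauPow_smul]

end IsGGSolution

/-- The series `𝔇f = ∑ f([τ^{m w}]) t^m / m!` in `M[[t]]`, where `w` plays the role of the appended
column `a(N+1)`. -/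
noncomputable def GGModule.dSeries {n N : ℕ} {A : Matrix (Fin n) (Fin N) ℤ} {M : Type*}
    [AddCommGroup M] [Module (GGRing n N) M] (w : Fin n → ℤ) (f : GGModule A →ₗ[GGRing n N] M) :
    ℕ → M :=
  expSeries ℂ (GGRing n N) fun m =>
    f (Submodule.Quotient.mk (GGRing.tauPow (fun i => (m : ℤ) * w i)))

theorem GGModule.dSeries_eq_expSeries_tauPow_smul {n N : ℕ} {A : Matrix (Fin n) (Fin N) ℤ}
    {M : Type*} [AddCommGroup M] [Module (GGRing n N) M] (w : Fin n → ℤ)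
    (f : GGModule A →ₗ[GGRing n N] M) :
    dSeries w f = expSeries ℂ (GGRing n N)
      fun m => GGRing.tauPow (N := N) (m • w) • f (Submodule.Quotient.mk 1) := by
  have hmk (v : Fin n → ℤ) : f (Submodule.Quotient.mk (GGRing.tauPow v))
      = GGRing.tauPow (N := N) v • f (Submodule.Quotient.mk 1) := by
    rw [← map_smul, ← Submodule.Quotient.mk_smul, smul_eq_mul, mul_one]
  have hw (m : ℕ) : (fun i => (m : ℤ) * w i) = m • w :=
    funext fun i => (nsmul_eq_mul m (w i)).symm
  simp only [dSeries, hmk, hw]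

theorem gg_series_annihilated_general {n N : ℕ} (A : Matrix (Fin n) (Fin N) ℤ) (w : Fin n → ℤ)
    (M : Type*) [AddCommGroup M] [Module (GGRing n N) M] [Module (GGRing n (N + 1)) (ℕ → M)]
    (hM : GGRing.IsPowerSeriesAction n N M) (f : GGModule A →ₗ[GGRing n N] M) :
    (∀ i : Fin n, GGRing.euler (appendColumn A w) i • GGModule.dSeries w f = 0) ∧
    (∀ j : Fin (N + 1),
      (GGRing.gen (.d j) - GGRing.tauPow (fun i => appendColumn A w i j)) •
        GGModule.dSeries w f = 0) ∧
    (∃! F : GGModule (appendColumn A w) →ₗ[GGRing n (N + 1)] (ℕ → M),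
      F (Submodule.Quotient.mk 1) = GGModule.dSeries w f) := by
  have hsol : IsGGSolution (appendColumn A w) (GGModule.dSeries w f) := by
    rw [GGModule.dSeries_eq_expSeries_tauPow_smul]
    exact ((GGModule.isGGSolution_mk_one A).map f).expSeries_tauPow_smul hM w
  exact ⟨hsol.euler_smul, hsol.d_sub_tauPow_smul, hsol.existsUnique_linearMap⟩

/-- with `Ã = (A | a(N+1))` and `M[[t]] = ℕ → M` equipped with the
`R_Ã`-module structure in which the `R_A`-generators act coefficientwise, `z_{N+1}` acts
as multiplication by `t` (coefficient shift) and `∂_{N+1}` as `d/dt`, the series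
`𝔇f = Σ_m f([τ^{m·a(N+1)}]) t^m/m!` is annihilated by `I_Ã` for every `R_A`-linear
`f : GG(A) → M`; equivalently there is a unique `R_Ã`-linear `F : GG(Ã) → M[[t]]`
with `F([1]) = 𝔇f`. -/
theorem gg_series_annihilated {n N : ℕ} (A : Matrix (Fin n) (Fin N) ℤ)
    (hspan : ∀ v : Fin n → ℚ, ∃ u : Fin N → ℚ,
      ∀ i : Fin n, v i = ∑ j : Fin N, (A i j : ℚ) * u j)
    (w : Fin n → ℤ)
    (Atil : Matrix (Fin n) (Fin (N + 1)) ℤ)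
    (hAtil : ∀ (i : Fin n) (j : Fin (N + 1)),
      Atil i j = if h : (j : ℕ) < N then A i ⟨j, h⟩ else w i)
    (M : Type*) [AddCommGroup M] [Module (GGRing n N) M]
    [Module (GGRing n (N + 1)) (ℕ → M)]
    (hz : ∀ (j : Fin N) (F : ℕ → M) (k : ℕ),
      (GGRing.gen (n := n) (N := N + 1) (GGGen.z (Fin.castSucc j)) • F) k
        = GGRing.gen (n := n) (N := N) (GGGen.z j) • F k)
    (hd : ∀ (j : Fin N) (F : ℕ → M) (k : ℕ),
      (GGRing.gen (n := n) (N := N + 1) (GGGen.d (Fin.castSucc j)) • F) k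
        = GGRing.gen (n := n) (N := N) (GGGen.d j) • F k)
    (hcc : ∀ (i : Fin n) (F : ℕ → M) (k : ℕ),
      (GGRing.gen (n := n) (N := N + 1) (GGGen.c i) • F) k
        = GGRing.gen (n := n) (N := N) (GGGen.c i) • F k)
    (ht : ∀ (i : Fin n) (F : ℕ → M) (k : ℕ),
      (GGRing.gen (n := n) (N := N + 1) (GGGen.t i) • F) k
        = GGRing.gen (n := n) (N := N) (GGGen.t i) • F k)
    (htinv : ∀ (i : Fin n) (F : ℕ → M) (k : ℕ),
      (GGRing.gen (n := n) (N := N + 1) (GGGen.tinv i) • F) k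
        = GGRing.gen (n := n) (N := N) (GGGen.tinv i) • F k)
    (hzlast : ∀ F : ℕ → M,
      (GGRing.gen (n := n) (N := N + 1) (GGGen.z (Fin.last N)) • F) 0 = 0 ∧
      ∀ k : ℕ, (GGRing.gen (n := n) (N := N + 1) (GGGen.z (Fin.last N)) • F) (k + 1) = F k)
    (hdlast : ∀ (F : ℕ → M) (k : ℕ),
      (GGRing.gen (n := n) (N := N + 1) (GGGen.d (Fin.last N)) • F) k = (k + 1) • F (k + 1))
    (f : GGModule A →ₗ[GGRing n N] M) :
    (∀ i : Fin n,
      GGRing.euler Atil i •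
        (fun m : ℕ => (algebraMap ℂ (GGRing n N) ((m.factorial : ℂ)⁻¹)) •
          f (Submodule.Quotient.mk (GGRing.tauPow (fun i' => (m : ℤ) * w i')))) = 0) ∧
    (∀ j : Fin (N + 1),
      (GGRing.gen (n := n) (N := N + 1) (GGGen.d j) - GGRing.tauPow (n := n) (N := N + 1) (fun i' => Atil i' j)) •
        (fun m : ℕ => (algebraMap ℂ (GGRing n N) ((m.factorial : ℂ)⁻¹)) •
          f (Submodule.Quotient.mk (GGRing.tauPow (fun i' => (m : ℤ) * w i')))) = 0) ∧
    (∃! F : GGModule Atil →ₗ[GGRing n (N + 1)] (ℕ → M),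
      F (Submodule.Quotient.mk 1)
        = fun m : ℕ => (algebraMap ℂ (GGRing n N) ((m.factorial : ℂ)⁻¹)) •
            f (Submodule.Quotient.mk (GGRing.tauPow (fun i' => (m : ℤ) * w i')))) := by
  obtain rfl : Atil = appendColumn A w := Matrix.ext hAtil
  exact gg_series_annihilated_general A w M ⟨hz, hd, hcc, ht, htinv, hzlast, hdlast⟩ f
end

section
/- Let A be an n×N homogeneous integer matrix (there exists φ ∈ ℤ^{1×n} with φ·a(j) = 1 for all j), let σ ⊆ {1,…,N} be a simplex, and let j₀ ∉ σ. Then for every k ∈ ℤ^σ there exists k' ∈ ℤ^σ such that k' − k ∈ A_σ^Tℤ^σ (so k and k' represent the same class in ℤ^σ/A_σ^Tℤ^σ) and 0 ≤ k'^T A_σ^{-1} a(j₀) < 1. In particular, every class of ℤ^σ/A_σ^Tℤ^σ has a representative k' with 0 ≤ Σ_{i∈σ} k'_i · p_{σi}(a(j₀)) < 1. -/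
/-!
Moving `k` by `Mᵀ *ᵥ w` changes `k ⬝ᵥ p` by `w ⬝ᵥ M *ᵥ p`, whatever `p` is. If `φ` is an integer
functional with `φ ⬝ᵥ M *ᵥ p = t > 0`, the moves along multiples of `φ` shift `k ⬝ᵥ p` by all
integer multiples of `t`, so one of them lands in any prescribed half-open interval of length `t`.
For `M = A_σ` and `p = A_σ⁻¹ a(j₀)`, homogeneity gives `t = 1`.
-/

open Matrix

theorem map_comp_mulVec_transpose_dotProduct {m ι S R : Type*} [Fintype m] [Fintype ι]
    [CommSemiring S] [Semiring R] (f : S →+* R) (M : Matrix m ι S) (w : m → S) (p : ι → R) :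
    (f ∘ (Mᵀ *ᵥ w)) ⬝ᵥ p = (f ∘ w) ⬝ᵥ M.map f *ᵥ p := by
  have hmap : f ∘ (Mᵀ *ᵥ w) = (f ∘ w) ᵥ* M.map f := by
    rw [mulVec_transpose]
    exact funext (f.map_vecMul M w)
  rw [hmap, dotProduct_mulVec]

section

variable {m ι R : Type*} [Fintype m] [Fintype ι] [Ring R]

theorem intCast_comp_add_mulVec_transpose_zsmul_dotProduct (M : Matrix m ι ℤ) (φ : m → ℤ)
    (k : ι → ℤ) (z : ℤ) (p : ι → R) :
    (Int.cast ∘ (k + Mᵀ *ᵥ (z • φ))) ⬝ᵥ p =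
      (Int.cast ∘ k) ⬝ᵥ p + z • ((Int.cast ∘ φ) ⬝ᵥ M.map Int.cast *ᵥ p) := by
  have hcast : (Int.cast ∘ (k + Mᵀ *ᵥ (z • φ)) : ι → R) =
      Int.cast ∘ k + z • (Int.cast ∘ (Mᵀ *ᵥ φ)) := by
    rw [mulVec_smul]
    ext i
    simp
  have hmove : (Int.cast ∘ (Mᵀ *ᵥ φ)) ⬝ᵥ p = (Int.cast ∘ φ) ⬝ᵥ M.map Int.cast *ᵥ p :=
    map_comp_mulVec_transpose_dotProduct (Int.castRingHom R) M φ p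
  rw [hcast, add_dotProduct, smul_dotProduct, hmove]

theorem representative_in_unit_window_general [LinearOrder R] [IsOrderedAddMonoid R]
    [Archimedean R] (M : Matrix m ι ℤ) (φ : m → ℤ) {v : m → R} {p : ι → R}
    (hp : M.map Int.cast *ᵥ p = v) {t : R} (ht : 0 < t) (hφ : (Int.cast ∘ φ) ⬝ᵥ v = t) (c : R)
    (k : ι → ℤ) :
    ∃ k' : ι → ℤ, (∃ w : m → ℤ, k' - k = Mᵀ *ᵥ w) ∧
      (Int.cast ∘ k') ⬝ᵥ p ∈ Set.Ico c (c + t) := by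
  obtain ⟨z, hz, -⟩ := existsUnique_add_zsmul_mem_Ico ht ((Int.cast ∘ k) ⬝ᵥ p) c
  refine ⟨k + Mᵀ *ᵥ (z • φ), ⟨z • φ, add_sub_cancel_left _ _⟩, ?_⟩
  rwa [intCast_comp_add_mulVec_transpose_zsmul_dotProduct, hp, hφ]

end

/-- for a homogeneous configuration `A`, a simplex `σ` (with inverse
matrix `B` of `A_σ` over `ℚ`) and `j₀ ∉ σ`, every class of `ℤ^σ/A_σ^Tℤ^σ` has a
representative `k'` with `0 ≤ k'^T A_σ^{-1} a(j₀) < 1`. -/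
theorem representative_in_unit_window {n N : ℕ} (A : Matrix (Fin n) (Fin N) ℤ)
    (φ : Fin n → ℤ) (hφ : ∀ j : Fin N, (∑ r, φ r * A r j) = 1)
    (σ : Finset (Fin N)) (hσ : σ.card = n)
    (B : Matrix {i : Fin N // i ∈ σ} (Fin n) ℚ)
    (hB1 : (Matrix.of fun r (i : {i : Fin N // i ∈ σ}) => ((A r i.1 : ℤ) : ℚ)) * B = 1)
    (hB2 : B * (Matrix.of fun r (i : {i : Fin N // i ∈ σ}) => ((A r i.1 : ℤ) : ℚ)) = 1)
    (j0 : Fin N) (hj0 : j0 ∉ σ) :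
    ∀ k : {i : Fin N // i ∈ σ} → ℤ, ∃ k' : {i : Fin N // i ∈ σ} → ℤ,
      (∃ w : Fin n → ℤ, ∀ i : {i : Fin N // i ∈ σ},
        k' i - k i = ((Matrix.of fun r (i : {i : Fin N // i ∈ σ}) => A r i.1)ᵀ.mulVec w) i) ∧
      0 ≤ (∑ i : {i : Fin N // i ∈ σ}, (k' i : ℚ) * B.mulVec (fun r => ((A r j0 : ℤ) : ℚ)) i) ∧
      (∑ i : {i : Fin N // i ∈ σ}, (k' i : ℚ) * B.mulVec (fun r => ((A r j0 : ℤ) : ℚ)) i) < 1 := by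
  intro k
  have hφ_j0 : ∑ r, (φ r : ℚ) * A r j0 = 1 := mod_cast hφ j0
  have hcoords : (Matrix.of fun r (i : {i : Fin N // i ∈ σ}) => (A r i.1 : ℚ)) *ᵥ B *ᵥ
      (fun r => (A r j0 : ℚ)) = fun r => (A r j0 : ℚ) := by
    rw [mulVec_mulVec, hB1, one_mulVec]
  obtain ⟨k', ⟨w, hw⟩, hk'⟩ := representative_in_unit_window_general
    (Matrix.of fun r (i : {i : Fin N // i ∈ σ}) => A r i.1) φ hcoords one_pos hφ_j0 0 k
  exact ⟨k', ⟨w, congrFun hw⟩, hk'.1, hk'.2.trans_eq (zero_add 1)⟩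
end

section
/- Let A be an n×N integer matrix with columns a(1),…,a(N), let I ⊆ {1,…,N} with |I| = n+1, and let Z₊ ⊆ I be such that for each j ∈ Z₊ the submatrix A_{I∖{j}} is invertible. Let ω ∈ ℝ^N, and suppose that either (a) I belongs to S(ω), or (b) for every j ∈ Z₊ the set I∖{j} belongs to S(ω). Then for every j ∈ Z₊ and every k ∉ I one has ω_{I∖{j}} · A_{I∖{j}}^{-1} a(k) < ω_k, where ω_{I∖{j}} denotes the row vector of the entries of ω indexed by I∖{j}. In other words, the cones C_Q and C_T of the secondary fan are contained in the cone C̃₊ = ∩_{j∈Z₊} { ω : ω_{I∖{j}} A_{I∖{j}}^{-1} a(k) < ω_k for all k ∉ I }. -/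
/-- `σ` belongs to the regular polyhedral subdivision `S(ω)`. -/
def memS {n N : ℕ} (A : Matrix (Fin n) (Fin N) ℤ) (ω : Fin N → ℝ)
    (σ : Set (Fin N)) : Prop :=
  ∃ v : Fin n → ℝ,
    (∀ i ∈ σ, (∑ r, v r * (A r i : ℝ)) = ω i) ∧
    (∀ j ∉ σ, (∑ r, v r * (A r j : ℝ)) < ω j)

/-!
A row vector is determined by its products with vectors spanning `ℝⁿ`. The columns indexed by
`I ∖ {j}` span, and in both cases the vector witnessing membership in `S(ω)` takes the values `ω` on
them. So it is the given `v`, and its strict inequalities outside `I` are the claim.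
-/

theorem eq_of_dotProduct_eq_of_span_eq_top {R m : Type*} [CommSemiring R] [Fintype m]
    {s : Set (m → R)} (hs : Submodule.span R s = ⊤) {v w : m → R}
    (h : ∀ u ∈ s, v ⬝ᵥ u = w ⬝ᵥ u) : v = w := by
  have hlin : dotProductBilin R R v = dotProductBilin R R w := LinearMap.ext_on hs h
  exact dotProduct_eq v w (LinearMap.congr_fun hlin)

theorem memS.sum_mul_lt {n N : ℕ} {A : Matrix (Fin n) (Fin N) ℤ} {ω : Fin N → ℝ}
    {σ τ : Set (Fin N)} (hτ : memS A ω τ) (hστ : σ ⊆ τ)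
    (hσ : Submodule.span ℝ ((A.map (Int.cast : ℤ → ℝ)).col '' σ) = ⊤) {v : Fin n → ℝ}
    (hv : ∀ i ∈ σ, (∑ r, v r * (A r i : ℝ)) = ω i) {k : Fin N} (hk : k ∉ τ) :
    (∑ r, v r * (A r k : ℝ)) < ω k := by
  obtain ⟨w, hw, hlt⟩ := hτ
  have hvw : v = w := eq_of_dotProduct_eq_of_span_eq_top hσ <|
    Set.forall_mem_image.2 fun i hi => (hv i hi).trans (hw i (hστ hi)).symm
  exact hvw ▸ hlt k hk

theorem cone_inclusion_Ctilde_general {n N : ℕ} (A : Matrix (Fin n) (Fin N) ℤ)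
    (I Zp : Finset (Fin N))
    (hspan : ∀ j ∈ Zp,
      Submodule.span ℝ ((A.map (Int.cast : ℤ → ℝ)).col '' (I.erase j : Set (Fin N))) = ⊤)
    (ω : Fin N → ℝ)
    (hω : memS A ω (I : Set (Fin N)) ∨ ∀ j ∈ Zp, memS A ω (I.erase j : Set (Fin N))) :
    ∀ j ∈ Zp, ∀ v : Fin n → ℝ,
      (∀ i ∈ I.erase j, (∑ r, v r * (A r i : ℝ)) = ω i) →
      ∀ k ∉ I, (∑ r, v r * (A r k : ℝ)) < ω k := by
  intro j hj v hv k hk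
  rcases hω with hQ | hT
  · exact hQ.sum_mul_lt (I.erase_subset j) (hspan j hj) hv hk
  · exact (hT j hj).sum_mul_lt subset_rfl (hspan j hj) hv (mt Finset.mem_of_mem_erase hk)

/-- `C_Q` and `C_T` are contained in the cone `C̃₊`.  Here
`ω_{I∖{j}}·A_{I∖{j}}^{-1}·a(k)` is expressed as `v · a(k)` where `v` is the (unique,
by the invertibility of `A_{I∖{j}}`) row vector with `v · a(i) = ω i` for all
`i ∈ I∖{j}`. -/
theorem cone_inclusion_Ctilde {n N : ℕ} (A : Matrix (Fin n) (Fin N) ℤ)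
    (I : Finset (Fin N)) (hI : I.card = n + 1)
    (Zp : Finset (Fin N)) (hZp : Zp ⊆ I)
    (hinv : ∀ j ∈ Zp,
      LinearIndependent ℝ (fun i : {i : Fin N // i ∈ I.erase j} =>
        fun r : Fin n => (A r i.1 : ℝ)))
    (ω : Fin N → ℝ)
    (hω : memS A ω (↑I : Set (Fin N)) ∨
      ∀ j ∈ Zp, memS A ω (↑(I.erase j) : Set (Fin N))) :
    ∀ j ∈ Zp, ∀ v : Fin n → ℝ,
      (∀ i ∈ I.erase j, (∑ r, v r * (A r i : ℝ)) = ω i) →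
      ∀ k ∉ I, (∑ r, v r * (A r k : ℝ)) < ω k := by
  refine cone_inclusion_Ctilde_general A I Zp (fun j hj => ?_) ω hω
  rw [Set.image_eq_range]
  exact (hinv j hj).span_eq_top_of_card_eq_finrank' (by simp [-Finset.mem_erase, hZp hj, hI])
end

section
/- Let α, β ∈ ℂ with Re α > 0 and Re β > 0, let κ ≥ 0 be a real number, let ρ > 0, and let f(w) = Σ_{n=0}^∞ a_n w^n be a holomorphic function on the disk {|w| < ρ}. Then for every z ∈ ℂ with |z| < ρ, the integral (1/Γ(β)) ∫_0^1 t^{α−1}(1−t)^{β−1} f(t^κ z) dt converges and equals Σ_{n=0}^∞ a_n · (Γ(α+κn)/Γ(α+β+κn)) · z^n, the series on the right being absolutely convergent. -/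
open Complex MeasureTheory

/-! For `0 < t < 1` and `κ ≥ 0` we have `|t ^ κ z| ≤ |z|`, so the terms `aₙ (t ^ κ z) ^ n` are
dominated by the summable constants `|aₙ z ^ n|`. Since the kernel `t ^ (α - 1) (1 - t) ^ (β - 1)`
is integrable, the series may be integrated term by term. On the `n`-th term the factor `t ^ (κ n)`
turns `α` into `α + κ n`, and the Beta integral gives the coefficient. -/

section DominatedSeries

variable {ι X 𝕜 E : Type*} [Countable ι] [MeasurableSpace X] {μ : Measure X}
  [NormedRing 𝕜] [NormedAddCommGroup E] [CompleteSpace E] [Module 𝕜 E] [IsBoundedSMul 𝕜 E]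
  {g : X → 𝕜} {F : ι → X → E} {u : ι → ℝ}

lemma integrable_smul_tsum_of_norm_le (hg : Integrable g μ)
    (hF : ∀ i, AEStronglyMeasurable (F i) μ) (hu : Summable u)
    (hFu : ∀ i, ∀ᵐ x ∂μ, ‖F i x‖ ≤ u i) :
    Integrable (fun x => g x • ∑' i, F i x) μ := by
  have hFu' : ∀ᵐ x ∂μ, ∀ i, ‖F i x‖ ≤ u i := ae_all_iff.mpr hFu
  have hmeas : AEStronglyMeasurable (fun x => ∑' i, F i x) μ := by
    refine aestronglyMeasurable_of_tendsto_ae Filter.atTop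
      (fun s => Finset.aestronglyMeasurable_fun_sum s fun i _ => hF i) ?_
    filter_upwards [hFu'] with x hx
    exact (hu.of_norm_bounded hx).hasSum
  refine hg.smul_bdd (∑' i, u i) hmeas ?_
  filter_upwards [hFu'] with x hx
  exact tsum_of_norm_bounded hu.hasSum hx

lemma hasSum_integral_smul_tsum_of_norm_le [NormedSpace ℝ E] (hg : Integrable g μ)
    (hF : ∀ i, AEStronglyMeasurable (F i) μ) (hu : Summable u)
    (hFu : ∀ i, ∀ᵐ x ∂μ, ‖F i x‖ ≤ u i) :
    HasSum (fun i => ∫ x, g x • F i x ∂μ) (∫ x, g x • ∑' i, F i x ∂μ) := by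
  refine hasSum_integral_of_dominated_convergence (fun i x => ‖g x‖ * u i)
    (fun i => hg.1.smul (hF i)) (fun i => ?_) (.of_forall fun x => hu.mul_left _) ?_ ?_
  · filter_upwards [hFu i] with x hx
    exact (norm_smul_le _ _).trans (mul_le_mul_of_nonneg_left hx (norm_nonneg _))
  · simpa only [tsum_mul_left] using hg.norm.mul_const _
  · filter_upwards [ae_all_iff.mpr hFu] with x hx
    exact (hu.of_norm_bounded hx).hasSum.const_smul (g x)

end DominatedSeries

/-- The kernel of the Erdélyi–Kober integral, i.e. the unnormalized complex Beta density. It is only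
meant to be used on `(0, 1)`, where both bases are positive reals. -/
noncomputable def erdelyiKoberKernel (α β : ℂ) (t : ℝ) : ℂ :=
  (t : ℂ) ^ (α - 1) * ((1 : ℂ) - t) ^ (β - 1)

/-- The Erdélyi–Kober integral `I_0^{(α,β),κ} f` at `z`. Being a Bochner integral, it is `0` when
the integrand is not integrable. -/
noncomputable def erdelyiKoberIntegral (α β : ℂ) (κ : ℝ) (f : ℂ → ℂ) (z : ℂ) : ℂ :=
  (Gamma β)⁻¹ * ∫ t in Set.Ioo (0 : ℝ) 1, erdelyiKoberKernel α β t * f (((t ^ κ : ℝ) : ℂ) * z)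

lemma integrableOn_erdelyiKoberKernel {α β : ℂ} (hα : 0 < α.re) (hβ : 0 < β.re) :
    IntegrableOn (erdelyiKoberKernel α β) (Set.Ioo (0 : ℝ) 1) :=
  (intervalIntegrable_iff_integrableOn_Ioo_of_le zero_le_one).mp (betaIntegral_convergent hα hβ)

lemma setIntegral_erdelyiKoberKernel (α β : ℂ) :
    ∫ t in Set.Ioo (0 : ℝ) 1, erdelyiKoberKernel α β t = betaIntegral α β := by
  rw [betaIntegral, intervalIntegral.integral_of_le zero_le_one, integral_Ioc_eq_integral_Ioo]
  rfl

lemma erdelyiKoberKernel_mul_cpow (α β s : ℂ) {t : ℝ} (ht : 0 < t) :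
    erdelyiKoberKernel α β t * (t : ℂ) ^ s = erdelyiKoberKernel (α + s) β t := by
  rw [erdelyiKoberKernel, erdelyiKoberKernel, add_sub_right_comm,
    cpow_add _ _ (ofReal_ne_zero.mpr ht.ne')]
  ring

lemma ofReal_rpow_pow {t : ℝ} (ht : 0 ≤ t) (κ : ℝ) (n : ℕ) :
    ((t ^ κ : ℝ) : ℂ) ^ n = (t : ℂ) ^ (κ * n : ℂ) := by
  rw [ofReal_cpow ht, cpow_mul_nat]

lemma norm_ofReal_rpow_mul_le {t κ : ℝ} (ht₀ : 0 ≤ t) (ht₁ : t ≤ 1) (hκ : 0 ≤ κ) (z : ℂ) :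
    ‖((t ^ κ : ℝ) : ℂ) * z‖ ≤ ‖z‖ := by
  rw [norm_mul, norm_real, Real.norm_of_nonneg (Real.rpow_nonneg ht₀ κ)]
  exact mul_le_of_le_one_left (norm_nonneg z) (Real.rpow_le_one ht₀ ht₁ hκ)

section PowerSeries

variable {α β : ℂ} {κ : ℝ}

lemma erdelyiKoberIntegral_const_mul_pow {n : ℕ} (hα : 0 < (α + κ * n).re) (hβ : 0 < β.re)
    (c z : ℂ) :
    erdelyiKoberIntegral α β κ (fun w => c * w ^ n) z =
      c * (Gamma (α + κ * n) / Gamma (α + β + κ * n)) * z ^ n := by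
  have hshift : ∀ t ∈ Set.Ioo (0 : ℝ) 1,
      erdelyiKoberKernel α β t * (c * (((t ^ κ : ℝ) : ℂ) * z) ^ n) =
        c * z ^ n * erdelyiKoberKernel (α + κ * n) β t := by
    intro t ht
    rw [← erdelyiKoberKernel_mul_cpow _ _ _ ht.1, mul_pow, ofReal_rpow_pow ht.1.le]
    ring
  have hΓ : Gamma β ≠ 0 := Gamma_ne_zero_of_re_pos hβ
  rw [erdelyiKoberIntegral, setIntegral_congr_fun measurableSet_Ioo hshift, integral_const_mul,
    setIntegral_erdelyiKoberKernel, betaIntegral_eq_Gamma_mul_div _ _ hα hβ, add_right_comm α]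
  field_simp

theorem erdelyi_kober_power_series_general (hα : 0 < α.re) (hβ : 0 < β.re) (hκ : 0 ≤ κ)
    {a : ℕ → ℂ} {z : ℂ} (ha : Summable fun n => a n * z ^ n) :
    IntegrableOn
      (fun t : ℝ => erdelyiKoberKernel α β t * ∑' n, a n * (((t ^ κ : ℝ) : ℂ) * z) ^ n)
      (Set.Ioo (0 : ℝ) 1) ∧
    Summable (fun n : ℕ => ‖a n * (Gamma (α + κ * n) / Gamma (α + β + κ * n)) * z ^ n‖) ∧
    erdelyiKoberIntegral α β κ (fun w => ∑' n, a n * w ^ n) z =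
      ∑' n : ℕ, a n * (Gamma (α + κ * n) / Gamma (α + β + κ * n)) * z ^ n := by
  have hkernel := integrableOn_erdelyiKoberKernel hα hβ
  have hmeas (n : ℕ) : AEStronglyMeasurable (fun t : ℝ => a n * (((t ^ κ : ℝ) : ℂ) * z) ^ n)
      (volume.restrict (Set.Ioo 0 1)) := by fun_prop
  have hbound (n : ℕ) : ∀ᵐ t : ℝ ∂volume.restrict (Set.Ioo 0 1),
      ‖a n * (((t ^ κ : ℝ) : ℂ) * z) ^ n‖ ≤ ‖a n * z ^ n‖ := by
    refine ae_restrict_of_forall_mem measurableSet_Ioo fun t ht => ?_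
    rw [norm_mul, norm_pow, norm_mul (a n), norm_pow]
    gcongr
    exact norm_ofReal_rpow_mul_le ht.1.le ht.2.le hκ z
  have hshift (n : ℕ) : 0 < (α + κ * n).re := by
    rw [add_re, re_ofReal_mul, natCast_re]
    positivity
  have hsum : HasSum (fun n : ℕ => a n * (Gamma (α + κ * n) / Gamma (α + β + κ * n)) * z ^ n)
      (erdelyiKoberIntegral α β κ (fun w => ∑' n, a n * w ^ n) z) := by
    simp only [← erdelyiKoberIntegral_const_mul_pow (hshift _) hβ]
    exact (hasSum_integral_smul_tsum_of_norm_le hkernel hmeas ha.norm hbound).mul_left _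
  exact ⟨integrable_smul_tsum_of_norm_le hkernel hmeas ha.norm hbound, hsum.summable.norm,
    hsum.tsum_eq.symm⟩

end PowerSeries

/-- the Erdélyi–Kober integral of a power series.  For `Re α > 0`,
`Re β > 0`, `κ ≥ 0` and `f(w) = Σ aₙ wⁿ` holomorphic on `|w| < ρ`, for `|z| < ρ` the
integral `(1/Γ(β)) ∫₀¹ t^{α−1}(1−t)^{β−1} f(t^κ z) dt` converges and equals
`Σ aₙ (Γ(α+κn)/Γ(α+β+κn)) zⁿ`, the latter series being absolutely convergent. -/
theorem erdelyi_kober_power_series (α β : ℂ) (hα : 0 < α.re) (hβ : 0 < β.re)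
    (κ : ℝ) (hκ : 0 ≤ κ) (ρ : ℝ) (hρ : 0 < ρ) (a : ℕ → ℂ)
    (ha : ∀ w : ℂ, ‖w‖ < ρ → Summable (fun n : ℕ => a n * w ^ n))
    (z : ℂ) (hz : ‖z‖ < ρ) :
    MeasureTheory.IntegrableOn
      (fun t : ℝ => (t : ℂ) ^ (α - 1) * ((1 : ℂ) - t) ^ (β - 1) *
        ∑' n : ℕ, a n * (((t ^ κ : ℝ) : ℂ) * z) ^ n)
      (Set.Ioo (0 : ℝ) 1) ∧
    Summable (fun n : ℕ =>
      ‖a n * (Complex.Gamma (α + κ * n) / Complex.Gamma (α + β + κ * n)) * z ^ n‖) ∧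
    (Complex.Gamma β)⁻¹ *
        ∫ t in Set.Ioo (0 : ℝ) 1,
          (t : ℂ) ^ (α - 1) * ((1 : ℂ) - t) ^ (β - 1) *
            ∑' n : ℕ, a n * (((t ^ κ : ℝ) : ℂ) * z) ^ n
      = ∑' n : ℕ, a n * (Complex.Gamma (α + κ * n) / Complex.Gamma (α + β + κ * n)) * z ^ n :=
  erdelyi_kober_power_series_general hα hβ hκ (ha z hz)
end

section
/- Let α ∈ ℂ, let s and κ be nonnegative integers, let 0 < ε < 1, let ρ > 0, and let f(w) = Σ_{n=0}^∞ a_n w^n be holomorphic on the disk {|w| < ρ}. Then for every z ∈ ℂ with (1+ε)^κ·|z| < ρ, one has Σ_{n=0}^∞ a_n · [(α+κn−1)(α+κn−2)⋯(α+κn−s)] · z^n = ((−1)^{s+1} s!/(2πi)) · ∮_{|t−1|=ε} t^{α−1} f(t^κ z) (1−t)^{-(s+1)} dt, where t^{α−1} = exp((α−1)·Log t) with the principal logarithm (well defined since the circle |t−1| = ε avoids (−∞,0]), the contour integral is over the positively oriented circle of radius ε centered at 1, and the empty product (s = 0) is interpreted as 1. Both sides converge. -/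
open Complex

/-!
By Cauchy's formula, `((-1)^(s+1) s!/(2πi)) ∮ g(t) (1-t)^{-(s+1)} dt` is the `s`-th derivative of
`g` at `1`; for `g(t) = t^β` this is the falling product `β(β-1)⋯(β-s+1)`. Expand `f(t^κ z)` in its
power series, which converges uniformly on the circle since `|t^κ z|` is at most `(1+ε)^κ |z|`
there, and integrate term by term: the `n`-th term is `a_n z^n` times the integral for
`β = α - 1 + κn`.
-/

section CircleIntegral

variable {E : Type*} [NormedAddCommGroup E] [NormedSpace ℂ E] [CompleteSpace E] {c : ℂ} {R : ℝ}

theorem hasSum_circleIntegral_of_norm_le {ι : Type*} [Countable ι] {F : ι → ℂ → E} {u : ι → ℝ}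
    (hR : 0 ≤ R) (hF : ∀ i, ContinuousOn (F i) (Metric.sphere c R)) (hu : Summable u)
    (hFu : ∀ i, ∀ t ∈ Metric.sphere c R, ‖F i t‖ ≤ u i) :
    HasSum (fun i => ∮ t in C(c, R), F i t) (∮ t in C(c, R), ∑' i, F i t) := by
  have h := (tendstoUniformlyOn_tsum hu hFu).tendsto_circleIntegral_of_continuousOn hR
    (Filter.Eventually.of_forall fun s => continuousOn_finsetSum s fun i _ => hF i)
  exact h.congr fun s => circleIntegral.integral_fun_sum fun i _ => (hF i).circleIntegrable hR

theorem hasSum_circleIntegral_smul_tsum_pow_smul {φ ψ : ℂ → ℂ} {a : ℕ → E} {r : ℝ} (hR : 0 ≤ R)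
    (hφ : ContinuousOn φ (Metric.sphere c R)) (hψ : ContinuousOn ψ (Metric.sphere c R))
    (hψr : ∀ t ∈ Metric.sphere c R, ‖ψ t‖ ≤ r) (ha : Summable fun n => r ^ n * ‖a n‖) :
    HasSum (fun n => (∮ t in C(c, R), φ t * ψ t ^ n) • a n)
      (∮ t in C(c, R), φ t • ∑' n, ψ t ^ n • a n) := by
  obtain ⟨M, hM⟩ := (isCompact_sphere c R).exists_bound_of_continuousOn hφ
  have hcont (n : ℕ) : ContinuousOn (fun t => φ t • ψ t ^ n • a n) (Metric.sphere c R) :=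
    hφ.smul ((hψ.pow n).smul continuousOn_const)
  have hbound (n : ℕ) : ∀ t ∈ Metric.sphere c R,
      ‖φ t • ψ t ^ n • a n‖ ≤ M * (r ^ n * ‖a n‖) := fun t ht => by
    have hM₀ : 0 ≤ M := (norm_nonneg _).trans (hM t ht)
    rw [norm_smul, norm_smul, norm_pow]
    gcongr
    exacts [hM t ht, hψr t ht]
  have hterm (n : ℕ) :
      (∮ t in C(c, R), φ t • ψ t ^ n • a n) = (∮ t in C(c, R), φ t * ψ t ^ n) • a n := by
    simp only [smul_smul, circleIntegral.integral_smul_const]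
  simpa only [hterm, tsum_const_smul'']
    using hasSum_circleIntegral_of_norm_le hR hcont (ha.mul_left M) hbound

theorem circleIntegral_inv_center_sub_pow_smul {g : ℂ → E} (hR : 0 < R) (s : ℕ)
    (hg : DiffContOnCl ℂ g (Metric.ball c R)) :
    ((-1 : ℂ) ^ (s + 1) * s.factorial / (2 * Real.pi * I)) •
      ∮ t in C(c, R), ((c - t) ^ (s + 1))⁻¹ • g t = iteratedDeriv s g c := by
  have hflip (t : ℂ) :
      ((c - t) ^ (s + 1))⁻¹ • g t = (-1 : ℂ) ^ (s + 1) • (1 / (t - c) ^ (s + 1)) • g t := by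
    rw [← neg_sub t c, neg_pow, mul_inv, ← inv_pow, inv_neg, inv_one, one_div, mul_smul]
  have hcoeff : (-1 : ℂ) ^ (s + 1) * s.factorial / (2 * Real.pi * I) * (-1) ^ (s + 1) *
      (2 * Real.pi * I / s.factorial) = 1 := by
    have hs : (s.factorial : ℂ) ≠ 0 := mod_cast s.factorial_ne_zero
    have hsign : (-1 : ℂ) ^ (s + 1) * (-1) ^ (s + 1) = 1 := by rw [← mul_pow]; simp
    field_simp [two_pi_I_ne_zero]
    linear_combination hsign
  simp only [hflip]
  rw [circleIntegral.integral_smul, hg.circleIntegral_one_div_sub_center_pow_smul hR, smul_smul,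
    smul_smul, hcoeff, one_smul]

end CircleIntegral

section ComplexPower

theorem iteratedDeriv_cpow_const (β : ℂ) (k : ℕ) {t : ℂ} (ht : t ∈ slitPlane) :
    iteratedDeriv k (fun w : ℂ => w ^ β) t =
      (∏ l ∈ Finset.range k, (β - l)) * t ^ (β - k) := by
  induction k generalizing t with
  | zero => simp
  | succ k ih =>
    have hderiv : HasDerivAt (fun w : ℂ => w ^ (β - k)) ((β - k) * t ^ (β - k - 1)) t :=
      (hasStrictDerivAt_cpow_const ht).hasDerivAt
    rw [iteratedDeriv_succ, (Set.EqOn.eventuallyEq_of_mem (fun w hw => ih hw)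
      (isOpen_slitPlane.mem_nhds ht)).deriv_eq, (hderiv.const_mul _).deriv,
      Finset.prod_range_succ, Nat.cast_succ, sub_sub, mul_assoc]

variable {ε : ℝ}

theorem closedBall_one_subset_slitPlane (hε : ε < 1) :
    Metric.closedBall (1 : ℂ) ε ⊆ slitPlane :=
  (Metric.closedBall_subset_ball hε).trans ball_one_subset_slitPlane

theorem sphere_one_subset_slitPlane (hε : ε < 1) : Metric.sphere (1 : ℂ) ε ⊆ slitPlane :=
  Metric.sphere_subset_closedBall.trans (closedBall_one_subset_slitPlane hε)

theorem circleIntegral_inv_one_sub_pow_mul_cpow (β : ℂ) (s : ℕ) (hε0 : 0 < ε) (hε1 : ε < 1) :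
    (-1 : ℂ) ^ (s + 1) * s.factorial / (2 * Real.pi * I) *
      (∮ t in C(1, ε), ((1 - t) ^ (s + 1))⁻¹ * t ^ β) = ∏ l ∈ Finset.range s, (β - l) := by
  have hdiff : DifferentiableOn ℂ (fun t : ℂ => t ^ β) slitPlane :=
    differentiableOn_id.cpow_const fun _ ht => ht
  have hcauchy := circleIntegral_inv_center_sub_pow_smul hε0 s
    (hdiff.diffContOnCl_ball (closedBall_one_subset_slitPlane hε1))
  rwa [iteratedDeriv_cpow_const β s one_mem_slitPlane, one_cpow, mul_one] at hcauchy

end ComplexPower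

section ErdelyiKober

variable {ε : ℝ}

theorem norm_pow_mul_le_of_mem_closedBall_one {𝕜 : Type*} [NormedDivisionRing 𝕜] (κ : ℕ) (z : 𝕜)
    {t : 𝕜} (ht : t ∈ Metric.closedBall (1 : 𝕜) ε) : ‖t ^ κ * z‖ ≤ (1 + ε) ^ κ * ‖z‖ := by
  have ht1 : ‖t‖ ≤ 1 + ε := by
    simpa only [norm_one] using norm_le_of_mem_closedBall ht
  rw [norm_mul, norm_pow]
  gcongr

theorem summable_pow_mul_norm_of_lt {𝕜 : Type*} [NormedDivisionRing 𝕜] [NormedAlgebra ℝ 𝕜]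
    [FiniteDimensional ℝ 𝕜] {a : ℕ → 𝕜} {r ρ : ℝ} (hr : 0 ≤ r) (hrρ : r < ρ)
    (ha : ∀ w : 𝕜, ‖w‖ < ρ → Summable fun n => a n * w ^ n) :
    Summable fun n => r ^ n * ‖a n‖ := by
  have hnorm : ‖algebraMap ℝ 𝕜 r‖ = r := by rw [norm_algebraMap', Real.norm_of_nonneg hr]
  simpa only [norm_mul, norm_pow, hnorm, mul_comm] using (ha _ (hnorm.trans_lt hrρ)).norm

theorem circleIntegral_cpow_kernel_mul_pow (α : ℂ) (s : ℕ) (κ z : ℂ) (n : ℕ)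
    (hε0 : 0 < ε) (hε1 : ε < 1) :
    (-1 : ℂ) ^ (s + 1) * s.factorial / (2 * Real.pi * I) *
      (∮ t in C(1, ε), exp ((α - 1) * log t) * ((1 - t) ^ (s + 1))⁻¹ * (t ^ κ * z) ^ n) =
    (∏ l ∈ Finset.range s, (α + κ * n - (l + 1))) * z ^ n := by
  have hintegrand : Set.EqOn
      (fun t : ℂ => exp ((α - 1) * log t) * ((1 - t) ^ (s + 1))⁻¹ * (t ^ κ * z) ^ n)
      (fun t => z ^ n * (((1 - t) ^ (s + 1))⁻¹ * t ^ (α - 1 + κ * n))) (Metric.sphere 1 ε) := by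
    intro t ht
    have ht0 : t ≠ 0 := slitPlane_ne_zero (sphere_one_subset_slitPlane hε1 ht)
    simp only [cpow_add _ _ ht0, cpow_mul_nat, cpow_def_of_ne_zero ht0 (α - 1), mul_pow,
      mul_comm (log t)]
    ring
  rw [circleIntegral.integral_congr hε0.le hintegrand, circleIntegral.integral_const_mul,
    mul_left_comm, circleIntegral_inv_one_sub_pow_mul_cpow _ s hε0 hε1, mul_comm]
  congr 1
  exact Finset.prod_congr rfl fun l _ => by ring

theorem erdelyi_kober_negative_integer_general {E : Type*} [NormedAddCommGroup E]
    [NormedSpace ℂ E] [CompleteSpace E] (α : ℂ) (s : ℕ) (κ : ℂ) (hε0 : 0 < ε) (hε1 : ε < 1)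
    {a : ℕ → E} {z : ℂ} {r : ℝ} (hr : ∀ t ∈ Metric.sphere (1 : ℂ) ε, ‖t ^ κ * z‖ ≤ r)
    (ha : Summable fun n => r ^ n * ‖a n‖) :
    HasSum (fun n : ℕ => ((∏ l ∈ Finset.range s, (α + κ * n - (l + 1))) * z ^ n) • a n)
      (((-1 : ℂ) ^ (s + 1) * s.factorial / (2 * Real.pi * I)) •
        ∮ t in C(1, ε), (exp ((α - 1) * log t) * ((1 - t) ^ (s + 1))⁻¹) •
          ∑' n : ℕ, (t ^ κ * z) ^ n • a n) := by
  have hslit := sphere_one_subset_slitPlane hε1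
  have hkernel : ContinuousOn
      (fun t : ℂ => exp ((α - 1) * log t) * ((1 - t) ^ (s + 1))⁻¹) (Metric.sphere 1 ε) := by
    refine (continuousOn_const.mul (continuousOn_id.clog hslit)).cexp.mul
      (ContinuousOn.inv₀ (by fun_prop) fun t ht => pow_ne_zero _ (sub_ne_zero.mpr ?_))
    exact (Metric.ne_of_mem_sphere ht hε0.ne').symm
  have hpow : ContinuousOn (fun t : ℂ => t ^ κ * z) (Metric.sphere 1 ε) :=
    (continuousOn_id.cpow_const hslit).mul continuousOn_const
  have hsum := hasSum_circleIntegral_smul_tsum_pow_smul hε0.le hkernel hpow hr ha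
  simpa only [smul_smul, circleIntegral_cpow_kernel_mul_pow α s κ z _ hε0 hε1]
    using hsum.const_smul ((-1 : ℂ) ^ (s + 1) * s.factorial / (2 * Real.pi * I))

end ErdelyiKober

/-- Erdélyi–Kober operator with parameter `β = −s`, `s ∈ ℕ`, expressed as a
contour integral over the circle `|t−1| = ε`.  Here `t^{α−1} = exp((α−1)·Log t)` with the
principal logarithm, and the falling product `(α+κn−1)⋯(α+κn−s)` appears coefficientwise. -/
theorem erdelyi_kober_negative_integer (α : ℂ) (s κ : ℕ) (ε : ℝ)
    (hε0 : 0 < ε) (hε1 : ε < 1) (ρ : ℝ) (hρ : 0 < ρ) (a : ℕ → ℂ)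
    (ha : ∀ w : ℂ, ‖w‖ < ρ → Summable (fun n : ℕ => a n * w ^ n))
    (z : ℂ) (hz : (1 + ε) ^ κ * ‖z‖ < ρ) :
    Summable (fun n : ℕ =>
      a n * (∏ l ∈ Finset.range s, (α + (κ : ℂ) * n - (l + 1))) * z ^ n) ∧
    (∑' n : ℕ, a n * (∏ l ∈ Finset.range s, (α + (κ : ℂ) * n - (l + 1))) * z ^ n)
      = ((-1 : ℂ) ^ (s + 1) * (s.factorial : ℂ)) / (2 * Real.pi * Complex.I) *
          ∮ t in C(1, ε),
            Complex.exp ((α - 1) * Complex.log t) *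
              (∑' n : ℕ, a n * (t ^ κ * z) ^ n) * ((1 - t) ^ (s + 1))⁻¹ := by
  have hradius : ∀ t ∈ Metric.sphere (1 : ℂ) ε, ‖t ^ (κ : ℂ) * z‖ ≤ (1 + ε) ^ κ * ‖z‖ :=
    fun t ht => by simpa only [cpow_natCast] using
      norm_pow_mul_le_of_mem_closedBall_one κ z (Metric.sphere_subset_closedBall ht)
  have hmajorant := summable_pow_mul_norm_of_lt (by positivity) hz ha
  have hsum := erdelyi_kober_negative_integer_general α s κ hε0 hε1 hradius hmajorant
  simp only [cpow_natCast, smul_eq_mul, mul_comm, mul_left_comm, mul_assoc] at hsum ⊢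
  exact ⟨hsum.summable, hsum.tsum_eq⟩
end
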